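/- arXiv:2003.11002 — 3 statements merged into one kernel-verified Lean document; each statement's English description precedes it below -/
import Mathlib

section
/- Let L̂ : L_p(μ) → ℝ be a continuous m-homogeneous polynomial, m ≥ 2, on a real L_p(μ) space, and let k ≤ m. Then sup_{‖x‖_p ≤ 1} ‖D̂^k L̂(x)‖ ≤ 2^{m−1} C_{k,m} ‖L̂‖, where C_{k,m} = k!·m^{m/p}/((m−k)^{(m−k)/p}·k^{k/p}) if 1 ≤ p ≤ m′, C_{k,m} = k!·m^{m/m′}/((m−k)^{(m−k)/m′}·k^{k/m′}) if m′ ≤ p ≤ m, and C_{k,m} = k!·m^{m/p′}/((m−k)^{(m−k)/p′}·k^{k/p′}) if m ≤ p ≤ ∞ (with m′ = m/(m−1), p′ = p/(p−1), and 0⁰ read as 1 when k = m). -/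
open Metric MeasureTheory
open scoped ENNReal

/-- The conjugate exponent `p' = p/(p-1)` of an extended-real exponent `p`
(with `p' = 1` for `p = ∞`), as a real number. -/
noncomputable def conjExp (p : ℝ≥0∞) : ℝ :=
  if p = ∞ then 1 else p.toReal / (p.toReal - 1)

/-- The Markov constant `C_{k,m} = k! m^{m/r} / ((m-k)^{(m-k)/r} k^{k/r})` with
regime exponent `r` (real powers, so `0⁰ = 1` when `k = m`). -/
noncomputable def markovC (k m : ℕ) (r : ℝ) : ℝ :=
  (k.factorial : ℝ) * (m : ℝ) ^ ((m : ℝ) / r)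
    / (((m : ℝ) - (k : ℝ)) ^ (((m : ℝ) - (k : ℝ)) / r) * (k : ℝ) ^ ((k : ℝ) / r))

/-!
For `|s|, |t| ≤ 1`, Clarkson's inequality
`‖a + b‖ ^ m + ‖a - b‖ ^ m ≤ 2 (‖a‖ ^ r + ‖b‖ ^ r) ^ (m / r)` bounds
`P (s • x + t • y) + (-1) ^ k P (s • x - t • y)` by `2 ‖P‖ (‖x‖ ^ r + ‖y‖ ^ r) ^ (m / r)` for an
`m`-homogeneous polynomial `P`.
The coefficient of `s ^ (m - k) t ^ k` in this sum is twice that in `P (s • x + t • y)`, which is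
`D̂ᵏP(x) y / k!`. Reading off the coefficient of degree `m - k` in `s` and of degree `k` in `t` by
Lagrange interpolation at Chebyshev nodes isolates it, since every other monomial of degree `m` has
degree less than `m - k` in `s` or less than `k` in `t`; this costs a factor
`2 ^ (m - k - 1) 2 ^ (k - 1)`. Scaling `x` and `y` so that `‖x‖ ^ r ≤ m - k` and `‖y‖ ^ r ≤ k`
gives the constant.

Clarkson's inequality with exponents `q ≥ 2` and `q' = q / (q - 1)` holds in inner product spaces by
the scalar case and convexity of powers, and passes to `L_p` for `q' ≤ p ≤ q` by Minkowski's
inequality. For `m' ≤ p ≤ m` take `q = m`; for `p ≤ m'` first weaken the right exponent `m'` to `p`;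
for `m ≤ p` take `q = p` and then weaken the left exponent to `m`, or use the triangle inequality if
`p = ∞`.
-/

/-- Clarkson's inequality with exponents `q` and `s` in `E`. For `1 < s ≤ 2` and `q = s / (s - 1)`
it is the classical one; separate exponents let each be weakened on its own. -/
def ClarksonInequality (E : Type*) [NormedAddCommGroup E] (q s : ℝ) : Prop :=
  ∀ a b : E, ‖a + b‖ ^ q + ‖a - b‖ ^ q ≤ 2 * (‖a‖ ^ s + ‖b‖ ^ s) ^ (q / s)

section Scalar

variable {q x : ℝ}

/-- The function of `a` that decreases from the right-hand side of the scalar Clarkson inequality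
at `a = x ^ (1 / (q - 1))` to its left-hand side at `a = 1`. -/
noncomputable def clarksonInterpolant (q x a : ℝ) : ℝ :=
  (1 + a ^ (1 - q) * x) * (1 + a * x) ^ (q - 1) + (1 - a ^ (1 - q) * x) * (1 - a * x) ^ (q - 1)

lemma clarksonInterpolant_one (hq : 1 < q) (hx : 0 ≤ x) (hx₁ : x ≤ 1) :
    clarksonInterpolant q x 1 = (1 + x) ^ q + (1 - x) ^ q := by
  have mul_rpow_sub_one {t : ℝ} (ht : 0 ≤ t) : t * t ^ (q - 1) = t ^ q := by
    rw [← Real.rpow_one_add' ht (by linarith), add_sub_cancel]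
  simp only [clarksonInterpolant, Real.one_rpow, one_mul]
  rw [mul_rpow_sub_one (by linarith), mul_rpow_sub_one (by linarith)]

lemma clarksonInterpolant_rpow (hq : 1 < q) (hx : 0 < x) :
    clarksonInterpolant q x (x ^ (1 / (q - 1))) = 2 * (1 + x ^ (q / (q - 1))) ^ (q - 1) := by
  have hq₀ : q - 1 ≠ 0 := (sub_pos.2 hq).ne'
  have hvanish : (x ^ (1 / (q - 1))) ^ (1 - q) * x = 1 := by
    rw [← Real.rpow_mul hx.le, ← Real.rpow_add_one hx.ne',
      show 1 / (q - 1) * (1 - q) + 1 = 0 by field_simp; ring, Real.rpow_zero]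
  have hbase : x ^ (1 / (q - 1)) * x = x ^ (q / (q - 1)) := by
    rw [← Real.rpow_add_one hx.ne']
    congr 1
    field_simp
    ring
  rw [clarksonInterpolant, hvanish, hbase]
  ring

lemma hasDerivAt_clarksonInterpolant {a : ℝ} (ha : 0 < a) (h₁ : 0 < 1 + a * x)
    (h₂ : 0 < 1 - a * x) :
    HasDerivAt (clarksonInterpolant q x)
      ((q - 1) * x * (1 - a ^ (-q)) * ((1 + a * x) ^ (q - 2) - (1 - a * x) ^ (q - 2))) a := by
  have hpow : HasDerivAt (fun a : ℝ ↦ a ^ (1 - q) * x) ((1 - q) * a ^ (1 - q - 1) * x) a :=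
    (Real.hasDerivAt_rpow_const (Or.inl ha.ne')).mul_const x
  have hlin : HasDerivAt (fun a : ℝ ↦ a * x) x a := by simpa using (hasDerivAt_id a).mul_const x
  have hadd := (hlin.const_add 1).rpow_const (p := q - 1) (Or.inl h₁.ne')
  have hsub := (hlin.const_sub 1).rpow_const (p := q - 1) (Or.inl h₂.ne')
  have split_rpow {t : ℝ} (ht : 0 < t) (r : ℝ) : t ^ (r + 1) = t ^ r * t :=
    Real.rpow_add_one ht.ne' r
  refine (((hpow.const_add 1).mul hadd).add ((hpow.const_sub 1).mul hsub)).congr_deriv ?_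
  rw [show q - 1 = q - 2 + 1 by ring, show 1 - q = -q + 1 by ring, split_rpow h₁, split_rpow h₂,
    split_rpow ha, add_sub_cancel_right, add_sub_cancel_right]
  ring

lemma antitoneOn_clarksonInterpolant (hq : 2 ≤ q) (hx : 0 < x) (hx₁ : x < 1) :
    AntitoneOn (clarksonInterpolant q x) (Set.Ioc 0 1) := by
  have hderiv {a : ℝ} (ha : a ∈ Set.Ioc (0 : ℝ) 1) :=
    hasDerivAt_clarksonInterpolant (q := q) ha.1 (x := x)
      (by nlinarith [mul_pos ha.1 hx]) (by nlinarith [ha.2])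
  refine antitoneOn_of_hasDerivWithinAt_nonpos (convex_Ioc 0 1)
    (fun a ha ↦ (hderiv ha).continuousAt.continuousWithinAt)
    (fun a ha ↦ (hderiv (interior_subset ha)).hasDerivWithinAt) fun a ha ↦ ?_
  obtain ⟨ha₀, ha₁⟩ := interior_subset ha
  have hle : (1 - a * x) ^ (q - 2) ≤ (1 + a * x) ^ (q - 2) :=
    Real.rpow_le_rpow (by nlinarith) (by nlinarith) (by linarith)
  have hone : 1 ≤ a ^ (-q) :=
    Real.one_le_rpow_of_pos_of_le_one_of_nonpos ha₀ ha₁ (by linarith)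
  exact mul_nonpos_of_nonpos_of_nonneg
    (mul_nonpos_of_nonneg_of_nonpos (mul_nonneg (by linarith) hx.le) (by linarith)) (by linarith)

lemma one_add_rpow_add_one_sub_rpow_le (hq : 2 ≤ q) (hx : 0 ≤ x) (hx₁ : x ≤ 1) :
    (1 + x) ^ q + (1 - x) ^ q ≤ 2 * (1 + x ^ (q / (q - 1))) ^ (q - 1) := by
  have hq₁ : 0 < q - 1 := by linarith
  rcases hx.eq_or_lt with rfl | hx₀
  · rw [Real.zero_rpow (div_pos (by linarith) hq₁).ne']
    norm_num
  rcases hx₁.eq_or_lt with rfl | hx₁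
  · rw [sub_self, Real.zero_rpow (by linarith), Real.one_rpow, one_add_one_eq_two,
      ← Real.rpow_one_add' (by norm_num) (by linarith)]
    norm_num
  have hle : x ^ (1 / (q - 1)) ≤ 1 := Real.rpow_le_one hx hx₁.le (by positivity)
  rw [← clarksonInterpolant_one (by linarith) hx hx₁.le,
    ← clarksonInterpolant_rpow (by linarith) hx₀]
  exact antitoneOn_clarksonInterpolant hq hx₀ hx₁ ⟨Real.rpow_pos_of_pos hx₀ _, hle⟩
    ⟨one_pos, le_rfl⟩ hle

lemma add_rpow_add_abs_sub_rpow_le {a b : ℝ} (hq : 2 ≤ q) (ha : 0 ≤ a) (hb : 0 ≤ b) :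
    (a + b) ^ q + |a - b| ^ q ≤ 2 * (a ^ (q / (q - 1)) + b ^ (q / (q - 1))) ^ (q - 1) := by
  wlog hba : b ≤ a generalizing a b
  · simpa only [add_comm, abs_sub_comm] using this hb ha (le_of_not_ge hba)
  rcases ha.eq_or_lt with rfl | ha
  · obtain rfl : b = 0 := le_antisymm hba hb
    rw [add_zero, sub_zero, abs_zero, Real.zero_rpow (by linarith), add_zero]
    exact mul_nonneg zero_le_two (Real.rpow_nonneg (by positivity) _)
  obtain ⟨x, rfl⟩ : ∃ x, b = a * x := ⟨b / a, by field_simp⟩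
  have hx : 0 ≤ x := nonneg_of_mul_nonneg_right hb ha
  have hx₁ : x ≤ 1 := by nlinarith
  have hpow : (a ^ (q / (q - 1))) ^ (q - 1) = a ^ q := by
    rw [← Real.rpow_mul ha.le, div_mul_cancel₀ _ (by linarith)]
  calc (a + a * x) ^ q + |a - a * x| ^ q
      = a ^ q * ((1 + x) ^ q + (1 - x) ^ q) := by
        rw [abs_of_nonneg (by linarith), ← mul_one_add, ← mul_one_sub,
          Real.mul_rpow ha.le (by linarith), Real.mul_rpow ha.le (by linarith), mul_add]
    _ ≤ a ^ q * (2 * (1 + x ^ (q / (q - 1))) ^ (q - 1)) := by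
        gcongr
        exact one_add_rpow_add_one_sub_rpow_le hq hx hx₁
    _ = 2 * (a ^ (q / (q - 1)) + (a * x) ^ (q / (q - 1))) ^ (q - 1) := by
        rw [Real.mul_rpow ha.le hx, ← mul_one_add, Real.mul_rpow (by positivity) (by positivity),
          hpow]
        ring

end Scalar

lemma rpow_add_add_rpow_sub_le {u d e p : ℝ} (hp : 1 ≤ p) (hd : |d| ≤ e) (he : e ≤ u) :
    (u + d) ^ p + (u - d) ^ p ≤ (u + e) ^ p + (u - e) ^ p := by
  rcases ((abs_nonneg d).trans hd).eq_or_lt with rfl | he₀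
  · rw [abs_nonpos_iff.1 hd]
  obtain ⟨hd₁, hd₂⟩ := abs_le.1 hd
  have hconv := (convexOn_rpow hp).2 (x := u + e) (y := u - e) (Set.mem_Ici.2 (by linarith))
    (Set.mem_Ici.2 (by linarith))
  have h₀ : 0 ≤ (e + d) / (2 * e) := div_nonneg (by linarith) (by linarith)
  have h₁ : 0 ≤ (e - d) / (2 * e) := div_nonneg (by linarith) (by linarith)
  have hsum : (e + d) / (2 * e) + (e - d) / (2 * e) = 1 := by
    field_simp
    ring
  have hadd := hconv h₀ h₁ hsum
  have hsub := hconv h₁ h₀ (by rw [add_comm, hsum])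
  simp only [smul_eq_mul] at hadd hsub
  rw [show (e + d) / (2 * e) * (u + e) + (e - d) / (2 * e) * (u - e) = u + d by
    field_simp; ring] at hadd
  rw [show (e - d) / (2 * e) * (u + e) + (e + d) / (2 * e) * (u - e) = u - d by
    field_simp; ring] at hsub
  calc (u + d) ^ p + (u - d) ^ p
      ≤ ((e + d) / (2 * e) + (e - d) / (2 * e)) * ((u + e) ^ p + (u - e) ^ p) := by linarith
    _ = (u + e) ^ p + (u - e) ^ p := by rw [hsum, one_mul]

lemma norm_add_rpow_add_norm_sub_rpow_le {H : Type*} [NormedAddCommGroup H]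
    [InnerProductSpace ℝ H] {q : ℝ} (hq : 2 ≤ q) (a b : H) :
    ‖a + b‖ ^ q + ‖a - b‖ ^ q ≤ (‖a‖ + ‖b‖) ^ q + |‖a‖ - ‖b‖| ^ q := by
  have rpow_eq {t : ℝ} (ht : 0 ≤ t) : t ^ q = (t ^ 2) ^ (q / 2) := by
    rw [← Real.rpow_natCast_mul ht, Nat.cast_ofNat, mul_div_cancel₀ q two_ne_zero]
  have hinner : |2 * inner ℝ a b| ≤ 2 * (‖a‖ * ‖b‖) := by
    rw [abs_mul, abs_two]
    exact mul_le_mul_of_nonneg_left (abs_real_inner_le_norm a b) zero_le_two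
  have h := rpow_add_add_rpow_sub_le (u := ‖a‖ ^ 2 + ‖b‖ ^ 2) (p := q / 2) (by linarith) hinner
    (by nlinarith [sq_nonneg (‖a‖ - ‖b‖)])
  rw [rpow_eq (norm_nonneg _), rpow_eq (norm_nonneg _), rpow_eq (abs_nonneg _),
    rpow_eq (add_nonneg (norm_nonneg a) (norm_nonneg b)), norm_add_sq_real, norm_sub_sq_real,
    sq_abs]
  convert h using 3 <;> ring

namespace ClarksonInequality

variable {E : Type*} [NormedAddCommGroup E] {q q' s s' : ℝ}

lemma of_innerProductSpace {H : Type*} [NormedAddCommGroup H] [InnerProductSpace ℝ H]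
    (hq : 2 ≤ q) : ClarksonInequality H q (q / (q - 1)) := fun a b ↦ by
  rw [div_div_cancel₀ (by linarith)]
  exact (norm_add_rpow_add_norm_sub_rpow_le hq a b).trans
    (add_rpow_add_abs_sub_rpow_le hq (norm_nonneg a) (norm_nonneg b))

lemma of_triangle (hq : 0 ≤ q) : ClarksonInequality E q 1 := fun a b ↦ by
  simp only [Real.rpow_one, div_one, two_mul]
  gcongr
  exacts [norm_add_le a b, norm_sub_le a b]

lemma mono_right (h : ClarksonInequality E q s) (hq : 0 ≤ q) (hs' : 0 < s') (hle : s' ≤ s) :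
    ClarksonInequality E q s' := fun a b ↦ by
  have hroot := Real.rpow_add_rpow_le (norm_nonneg a) (norm_nonneg b) hs' hle
  have rpow_div_eq (t : ℝ) : (‖a‖ ^ t + ‖b‖ ^ t) ^ (q / t) =
      ((‖a‖ ^ t + ‖b‖ ^ t) ^ (1 / t)) ^ q := by
    rw [← Real.rpow_mul (by positivity), one_div_mul_eq_div]
  refine (h a b).trans ?_
  rw [rpow_div_eq, rpow_div_eq]
  gcongr

lemma mono_left (h : ClarksonInequality E q s) (hq' : 0 < q') (hle : q' ≤ q) :
    ClarksonInequality E q' s := fun a b ↦ by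
  have hq : 0 < q := hq'.trans_le hle
  have root_eq (t : ℝ) (ht : 0 ≤ t) : (t ^ q) ^ (q' / q) = t ^ q' := by
    rw [← Real.rpow_mul ht, mul_div_cancel₀ q' hq.ne']
  have hmean := (Real.concaveOn_rpow (p := q' / q) (by positivity) (div_le_one_of_le₀ hle hq.le)).2
    (Set.mem_Ici.2 (by positivity : 0 ≤ ‖a + b‖ ^ q))
    (Set.mem_Ici.2 (by positivity : 0 ≤ ‖a - b‖ ^ q)) one_half_pos.le one_half_pos.le
    (add_halves 1)
  simp only [smul_eq_mul, root_eq _ (norm_nonneg _), ← mul_add] at hmean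
  have hhalf : 1 / 2 * (‖a + b‖ ^ q + ‖a - b‖ ^ q) ≤ (‖a‖ ^ s + ‖b‖ ^ s) ^ (q / s) := by
    linarith [h a b]
  have hpow := Real.rpow_le_rpow (by positivity) hhalf (div_nonneg hq'.le hq.le)
  rw [← Real.rpow_mul (by positivity), show q / s * (q' / q) = q' / s by field_simp] at hpow
  linarith

end ClarksonInequality

section Lp

variable {α : Type*} [MeasurableSpace α] {μ : Measure α}

lemma integral_rpow_add_integral_rpow_le {u v : α → ℝ} {r : ℝ} (hr : 1 ≤ r)
    (hu : Integrable u μ) (hv : Integrable v μ) (hu₀ : ∀ x, 0 ≤ u x) (hv₀ : ∀ x, 0 ≤ v x) :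
    ((∫ x, u x ∂μ) ^ r + (∫ x, v x ∂μ) ^ r) ^ (1 / r) ≤ ∫ x, (u x ^ r + v x ^ r) ^ (1 / r) ∂μ := by
  have hr₀ : 0 < r := by linarith
  have : Fact (1 ≤ ENNReal.ofReal r) := ⟨by simpa⟩
  have hnorm (w : ℝ × ℝ) (h₁ : 0 ≤ w.1) (h₂ : 0 ≤ w.2) :
      ‖WithLp.toLp (ENNReal.ofReal r) w‖ = (w.1 ^ r + w.2 ^ r) ^ (1 / r) := by
    rw [WithLp.prod_norm_eq_add (by rwa [ENNReal.toReal_ofReal hr₀.le]),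
      ENNReal.toReal_ofReal hr₀.le, WithLp.toLp_fst, WithLp.toLp_snd, Real.norm_of_nonneg h₁,
      Real.norm_of_nonneg h₂]
  have hint : ∫ x, WithLp.toLp (ENNReal.ofReal r) (u x, v x) ∂μ =
      WithLp.toLp (ENNReal.ofReal r) (∫ x, u x ∂μ, ∫ x, v x ∂μ) := by
    rw [← integral_pair hu hv]
    exact ((WithLp.prodContinuousLinearEquiv (ENNReal.ofReal r) ℝ ℝ ℝ).symm).integral_comp_comm
      (fun x ↦ (u x, v x))
  have h := norm_integral_le_integral_norm (μ := μ)
    (fun x ↦ WithLp.toLp (ENNReal.ofReal r) (u x, v x))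
  rw [hint, hnorm _ (integral_nonneg hu₀) (integral_nonneg hv₀)] at h
  simpa only [fun x ↦ hnorm (u x, v x) (hu₀ x) (hv₀ x)] using h

variable {E : Type*} [NormedAddCommGroup E] {p : ℝ≥0∞} {f g : α → E}

lemma integral_norm_rpow_eq_lpNorm_rpow (hp₀ : p ≠ 0) (hp : p ≠ ∞)
    (hf : AEStronglyMeasurable f μ) :
    ∫ x, ‖f x‖ ^ p.toReal ∂μ = lpNorm f p μ ^ p.toReal := by
  rw [lpNorm_eq_integral_norm_rpow_toReal hp₀ hp hf,
    Real.rpow_inv_rpow (integral_nonneg fun x ↦ by positivity) (ENNReal.toReal_pos hp₀ hp).ne']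

lemma lpNorm_norm_rpow {s : ℝ} (hs : 0 < s) (hf : AEStronglyMeasurable f μ) :
    lpNorm (fun x ↦ ‖f x‖ ^ s) (p / ENNReal.ofReal s) μ = lpNorm f p μ ^ s := by
  have hmeas : AEStronglyMeasurable (fun x ↦ ‖f x‖ ^ s) μ :=
    (hf.norm.aemeasurable.pow_const s).aestronglyMeasurable
  rw [← toReal_eLpNorm hmeas, ← toReal_eLpNorm hf, eLpNorm_norm_rpow f hs,
    ENNReal.div_mul_cancel (by simpa) ENNReal.ofReal_ne_top, ENNReal.toReal_rpow]

lemma memLp_norm_rpow {s : ℝ} (hs : 0 < s) (hf : MemLp f p μ) :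
    MemLp (fun x ↦ ‖f x‖ ^ s) (p / ENNReal.ofReal s) μ := by
  simpa only [ENNReal.toReal_ofReal hs.le] using hf.norm_rpow_div (ENNReal.ofReal s)

lemma integrable_and_integral_norm_rpow_add_norm_rpow_le {s : ℝ} (hs : 0 < s)
    (hsp : ENNReal.ofReal s ≤ p) (hp : p ≠ ∞) (hf : MemLp f p μ) (hg : MemLp g p μ) :
    Integrable (fun x ↦ (‖f x‖ ^ s + ‖g x‖ ^ s) ^ (p.toReal / s)) μ ∧
      ∫ x, (‖f x‖ ^ s + ‖g x‖ ^ s) ^ (p.toReal / s) ∂μ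
        ≤ (lpNorm f p μ ^ s + lpNorm g p μ ^ s) ^ (p.toReal / s) := by
  have hs₀ : ENNReal.ofReal s ≠ 0 := by simpa
  have htoReal : (p / ENNReal.ofReal s).toReal = p.toReal / s := by
    rw [ENNReal.toReal_div, ENNReal.toReal_ofReal hs.le]
  have hone : 1 ≤ p / ENNReal.ofReal s := by
    rwa [ENNReal.le_div_iff_mul_le (.inl hs₀) (.inl ENNReal.ofReal_ne_top), one_mul]
  have hzero : p / ENNReal.ofReal s ≠ 0 := (one_pos.trans_le hone).ne'
  have htop : p / ENNReal.ofReal s ≠ ∞ := ENNReal.div_ne_top hp hs₀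
  have hnorm (x : α) : ‖‖f x‖ ^ s + ‖g x‖ ^ s‖ = ‖f x‖ ^ s + ‖g x‖ ^ s :=
    Real.norm_of_nonneg (by positivity)
  have hmem : MemLp (fun x ↦ ‖f x‖ ^ s + ‖g x‖ ^ s) (p / ENNReal.ofReal s) μ :=
    (memLp_norm_rpow hs hf).add (memLp_norm_rpow hs hg)
  have hint := hmem.integrable_norm_rpow hzero htop
  have heq := integral_norm_rpow_eq_lpNorm_rpow hzero htop hmem.aestronglyMeasurable
  simp only [hnorm, htoReal] at hint heq
  refine ⟨hint, heq.trans_le ?_⟩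
  rw [← lpNorm_norm_rpow hs hf.aestronglyMeasurable, ← lpNorm_norm_rpow hs hg.aestronglyMeasurable]
  exact Real.rpow_le_rpow lpNorm_nonneg (lpNorm_add_le (memLp_norm_rpow hs hf) hone) (by positivity)

lemma lpNorm_rpow_add_lpNorm_rpow_le_integral {q : ℝ} (hp₀ : p ≠ 0) (hp : p ≠ ∞)
    (hpq : p.toReal ≤ q) (hf : MemLp f p μ) (hg : MemLp g p μ) :
    (lpNorm f p μ ^ q + lpNorm g p μ ^ q) ^ (p.toReal / q)
      ≤ ∫ x, (‖f x‖ ^ q + ‖g x‖ ^ q) ^ (p.toReal / q) ∂μ := by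
  have hP : 0 < p.toReal := ENNReal.toReal_pos hp₀ hp
  have rpow_rpow {t : ℝ} (ht : 0 ≤ t) : (t ^ p.toReal) ^ (q / p.toReal) = t ^ q := by
    rw [← Real.rpow_mul ht, mul_div_cancel₀ q hP.ne']
  have h := integral_rpow_add_integral_rpow_le ((one_le_div hP).2 hpq)
    (hf.integrable_norm_rpow hp₀ hp) (hg.integrable_norm_rpow hp₀ hp)
    (fun x ↦ by positivity) (fun x ↦ by positivity)
  simpa only [integral_norm_rpow_eq_lpNorm_rpow hp₀ hp hf.aestronglyMeasurable,
    integral_norm_rpow_eq_lpNorm_rpow hp₀ hp hg.aestronglyMeasurable, one_div_div, rpow_rpow,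
    lpNorm_nonneg, norm_nonneg] using h

lemma lpNorm_add_rpow_add_lpNorm_sub_rpow_le {q s : ℝ} (h : ClarksonInequality E q s) (hs : 0 < s)
    (hsp : ENNReal.ofReal s ≤ p) (hpq : p ≤ ENNReal.ofReal q) (hf : MemLp f p μ)
    (hg : MemLp g p μ) :
    lpNorm (f + g) p μ ^ q + lpNorm (f - g) p μ ^ q
      ≤ 2 * (lpNorm f p μ ^ s + lpNorm g p μ ^ s) ^ (q / s) := by
  have hp : p ≠ ∞ := ne_top_of_le_ne_top ENNReal.ofReal_ne_top hpq
  have hp₀ : p ≠ 0 := ((ENNReal.ofReal_pos.2 hs).trans_le hsp).ne'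
  have hP : 0 < p.toReal := ENNReal.toReal_pos hp₀ hp
  have hq : 0 < q := ENNReal.ofReal_pos.1 ((pos_of_ne_zero hp₀).trans_le hpq)
  have sum_nonneg (u v : α → E) (t : ℝ) : 0 ≤ lpNorm u p μ ^ t + lpNorm v p μ ^ t :=
    add_nonneg (Real.rpow_nonneg lpNorm_nonneg t) (Real.rpow_nonneg lpNorm_nonneg t)
  have root_eq {t : ℝ} (ht : 0 ≤ t) :
      (2 * t ^ (q / s)) ^ (p.toReal / q) = 2 ^ (p.toReal / q) * t ^ (p.toReal / s) := by
    rw [Real.mul_rpow zero_le_two (by positivity), ← Real.rpow_mul ht,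
      show q / s * (p.toReal / q) = p.toReal / s by field_simp]
  have hpointwise (x : α) : (‖f x + g x‖ ^ q + ‖f x - g x‖ ^ q) ^ (p.toReal / q)
      ≤ 2 ^ (p.toReal / q) * (‖f x‖ ^ s + ‖g x‖ ^ s) ^ (p.toReal / s) := by
    rw [← root_eq (by positivity)]
    exact Real.rpow_le_rpow (by positivity) (h (f x) (g x)) (by positivity)
  obtain ⟨hint, hle⟩ := integrable_and_integral_norm_rpow_add_norm_rpow_le hs hsp hp hf hg
  rw [← Real.rpow_le_rpow_iff (sum_nonneg _ _ q)
    (mul_nonneg zero_le_two (Real.rpow_nonneg (sum_nonneg _ _ s) _)) (div_pos hP hq),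
    root_eq (sum_nonneg _ _ s)]
  calc (lpNorm (f + g) p μ ^ q + lpNorm (f - g) p μ ^ q) ^ (p.toReal / q)
      ≤ ∫ x, (‖f x + g x‖ ^ q + ‖f x - g x‖ ^ q) ^ (p.toReal / q) ∂μ :=
        lpNorm_rpow_add_lpNorm_rpow_le_integral hp₀ hp
          (ENNReal.toReal_le_of_le_ofReal hq.le hpq) (hf.add hg) (hf.sub hg)
    _ ≤ ∫ x, 2 ^ (p.toReal / q) * (‖f x‖ ^ s + ‖g x‖ ^ s) ^ (p.toReal / s) ∂μ :=
        integral_mono_of_nonneg (.of_forall fun x ↦ by positivity) (hint.const_mul _)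
          (.of_forall hpointwise)
    _ ≤ 2 ^ (p.toReal / q) * (lpNorm f p μ ^ s + lpNorm g p μ ^ s) ^ (p.toReal / s) := by
        rw [integral_const_mul]
        gcongr

lemma ClarksonInequality.lp [Fact (1 ≤ p)] {q s : ℝ} (h : ClarksonInequality E q s) (hs : 0 < s)
    (hsp : ENNReal.ofReal s ≤ p) (hpq : p ≤ ENNReal.ofReal q) :
    ClarksonInequality (Lp E p μ) q s := fun a b ↦ by
  have norm_eq {f : Lp E p μ} {u : α → E} (hfu : f =ᵐ[μ] u) (hu : MemLp u p μ) :
      ‖f‖ = lpNorm u p μ := by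
    rw [Lp.norm_def, eLpNorm_congr_ae hfu, toReal_eLpNorm hu.aestronglyMeasurable]
  have ha := Lp.memLp a
  have hb := Lp.memLp b
  rw [norm_eq (Lp.coeFn_add a b) (ha.add hb), norm_eq (Lp.coeFn_sub a b) (ha.sub hb),
    norm_eq .rfl ha, norm_eq .rfl hb]
  exact lpNorm_add_rpow_add_lpNorm_sub_rpow_le h hs hsp hpq ha hb

end Lp

section Regime

variable {m : ℕ} {p : ℝ≥0∞} {r : ℝ}

/-- `r` is the exponent that replaces `p` in the Markov constant of `m`-homogeneous polynomials on
`L_p`: it is `p`, `m'` or `p'` according to the position of `p` relative to `m'` and `m`. Where two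
regimes meet, their exponents agree. -/
inductive IsRegimeExponent (m : ℕ) (p : ℝ≥0∞) : ℝ → Prop
  | low (h : p ≤ ENNReal.ofReal ((m : ℝ) / ((m : ℝ) - 1))) : IsRegimeExponent m p p.toReal
  | mid (h₁ : ENNReal.ofReal ((m : ℝ) / ((m : ℝ) - 1)) ≤ p) (h₂ : p ≤ m) :
      IsRegimeExponent m p ((m : ℝ) / ((m : ℝ) - 1))
  | high (h : (m : ℝ≥0∞) ≤ p) : IsRegimeExponent m p (conjExp p)

lemma IsRegimeExponent.pos [Fact (1 ≤ p)] (hr : IsRegimeExponent m p r) (hm : 2 ≤ m) : 0 < r := by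
  have hm₂ : (2 : ℝ) ≤ m := by exact_mod_cast hm
  cases hr with
  | low h =>
    exact ENNReal.toReal_pos (one_pos.trans_le Fact.out).ne' (ne_top_of_le_ne_top (by simp) h)
  | mid => exact div_pos (by linarith) (by linarith)
  | high h =>
    by_cases hp : p = ∞
    · rw [conjExp, if_pos hp]
      exact one_pos
    · have hle : (m : ℝ) ≤ p.toReal := by simpa using ENNReal.toReal_mono hp h
      rw [conjExp, if_neg hp]
      exact div_pos (by linarith) (by linarith)

lemma IsRegimeExponent.clarksonInequality_lp [Fact (1 ≤ p)] {H : Type*} [NormedAddCommGroup H]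
    [InnerProductSpace ℝ H] {α : Type*} [MeasurableSpace α] {μ : Measure α}
    (hr : IsRegimeExponent m p r) (hm : 2 ≤ m) : ClarksonInequality (Lp H p μ) m r := by
  have hpos := hr.pos hm
  have hm₂ : (2 : ℝ) ≤ m := by exact_mod_cast hm
  have conj_le {t : ℝ} (ht : 2 ≤ t) : t / (t - 1) ≤ t := div_le_self (by linarith) (by linarith)
  cases hr with
  | low h =>
    have hle : p.toReal ≤ (m : ℝ) / ((m : ℝ) - 1) := ENNReal.toReal_le_of_le_ofReal
      (div_nonneg (by linarith) (by linarith)) h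
    exact ((ClarksonInequality.of_innerProductSpace hm₂).mono_right (by linarith) hpos hle).lp hpos
      ENNReal.ofReal_toReal_le (h.trans (ENNReal.ofReal_le_ofReal (conj_le hm₂)))
  | mid h₁ h₂ =>
    exact (ClarksonInequality.of_innerProductSpace hm₂).lp hpos h₁ (by rwa [ENNReal.ofReal_natCast])
  | high h =>
    by_cases hp : p = ∞
    · rw [conjExp, if_pos hp]
      exact ClarksonInequality.of_triangle m.cast_nonneg
    · have hle : (m : ℝ) ≤ p.toReal := by simpa using ENNReal.toReal_mono hp h
      rw [conjExp, if_neg hp] at hpos ⊢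
      have hclarkson : ClarksonInequality H p.toReal (p.toReal / (p.toReal - 1)) :=
        .of_innerProductSpace (hm₂.trans hle)
      refine (hclarkson.lp hpos ?_ (ENNReal.ofReal_toReal hp).ge).mono_left (by linarith) hle
      exact (ENNReal.ofReal_le_ofReal (conj_le (hm₂.trans hle))).trans ENNReal.ofReal_toReal_le

end Regime

section Coefficients

open Finset Polynomial.Chebyshev

/-- The weights for which `∑ j, w j * P (cos (j π / n))` is the degree-`n` coefficient of a
polynomial `P` of degree at most `n`. -/
noncomputable def leadingCoeffWeight (n j : ℕ) : ℝ :=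
  (∏ i ∈ (range (n + 1)).erase j, (node n j - node n i))⁻¹

lemma sum_leadingCoeffWeight_mul_eval (n : ℕ) {P : Polynomial ℝ} (hP : P.degree ≤ n) :
    ∑ j ∈ range (n + 1), leadingCoeffWeight n j * P.eval (node n j) = P.coeff n := by
  have hinj : Set.InjOn (node n) (range (n + 1)) :=
    (strictAntiOn_node n).injOn.mono fun j hj ↦ by simpa using Finset.mem_range_succ_iff.1 hj
  have hdeg : P.degree < #(range (n + 1)) := by
    rw [card_range]
    exact hP.trans_lt (by exact_mod_cast n.lt_succ_self)
  have h := Lagrange.coeff_eq_sum hinj hdeg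
  simp only [card_range, add_tsub_cancel_right] at h
  rw [h]
  exact sum_congr rfl fun j _ ↦ (div_eq_inv_mul _ _).symm

lemma sum_leadingCoeffWeight_mul_node_pow {n i : ℕ} (hi : i ≤ n) :
    ∑ j ∈ range (n + 1), leadingCoeffWeight n j * node n j ^ i = if i = n then 1 else 0 := by
  have h := sum_leadingCoeffWeight_mul_eval n (P := Polynomial.X ^ i)
    ((Polynomial.degree_X_pow_le i).trans (by exact_mod_cast hi))
  simpa only [Polynomial.eval_pow, Polynomial.eval_X, Polynomial.coeff_X_pow, eq_comm] using h

lemma abs_leadingCoeffWeight {n j : ℕ} (hj : j ≤ n) :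
    |leadingCoeffWeight n j| = leadingCoeffWeight n j * (T ℝ n).eval (node n j) := by
  have hpos : 0 < (-1) ^ j * leadingCoeffWeight n j := by
    simpa only [leadingCoeffWeight, mul_inv, ← inv_pow, inv_neg_one] using
      inv_pos.2 (zero_lt_prod_node_sub_node hj)
  rw [eval_T_real_node (mem_Iic.2 hj), mul_comm, ← abs_of_pos hpos, abs_mul, abs_neg_one_pow,
    one_mul]

lemma sum_abs_leadingCoeffWeight (n : ℕ) :
    ∑ j ∈ range (n + 1), |leadingCoeffWeight n j| = 2 ^ (n - 1) := by
  rw [sum_congr rfl fun j hj ↦ abs_leadingCoeffWeight (mem_range_succ_iff.1 hj),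
    sum_leadingCoeffWeight_mul_eval n (by simp)]
  simpa [Polynomial.leadingCoeff] using leadingCoeff_T ℝ (n : ℤ)

variable {G : Type*} [NormedAddCommGroup G] [NormedSpace ℝ G] {m k : ℕ} {C : ℝ} {c : ℕ → G}

lemma coeff_eq_sum_leadingCoeffWeight (hk : k ≤ m) (c : ℕ → G) :
    c k = ∑ a ∈ range (m - k + 1), ∑ b ∈ range (k + 1),
      (leadingCoeffWeight (m - k) a * leadingCoeffWeight k b) •
        ∑ i ∈ range (m + 1), (node (m - k) a ^ (m - i) * node k b ^ i) • c i := by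
  have hfactor (i : ℕ) : ∑ a ∈ range (m - k + 1), ∑ b ∈ range (k + 1),
      (leadingCoeffWeight (m - k) a * leadingCoeffWeight k b) *
        (node (m - k) a ^ (m - i) * node k b ^ i) =
      (∑ a ∈ range (m - k + 1), leadingCoeffWeight (m - k) a * node (m - k) a ^ (m - i)) *
        ∑ b ∈ range (k + 1), leadingCoeffWeight k b * node k b ^ i := by
    rw [sum_mul_sum]
    exact sum_congr rfl fun a _ ↦ sum_congr rfl fun b _ ↦ by ring
  have hcollect : ∑ a ∈ range (m - k + 1), ∑ b ∈ range (k + 1),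
      (leadingCoeffWeight (m - k) a * leadingCoeffWeight k b) •
        ∑ i ∈ range (m + 1), (node (m - k) a ^ (m - i) * node k b ^ i) • c i =
      ∑ i ∈ range (m + 1), ((∑ a ∈ range (m - k + 1),
        leadingCoeffWeight (m - k) a * node (m - k) a ^ (m - i)) *
          ∑ b ∈ range (k + 1), leadingCoeffWeight k b * node k b ^ i) • c i := by
    simp only [← hfactor, sum_smul, smul_sum, smul_smul]
    exact (sum_congr rfl fun a _ ↦ sum_comm).trans sum_comm
  rw [hcollect, sum_eq_single_of_mem k (mem_range_succ_iff.2 hk)]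
  · rw [sum_leadingCoeffWeight_mul_node_pow le_rfl, sum_leadingCoeffWeight_mul_node_pow le_rfl,
      if_pos rfl, if_pos rfl, one_mul, one_smul]
  · intro i hi hik
    rcases hik.lt_or_gt with hlt | hgt
    · rw [sum_leadingCoeffWeight_mul_node_pow hlt.le, if_neg hik, mul_zero, zero_smul]
    · have hi := mem_range_succ_iff.1 hi
      rw [sum_leadingCoeffWeight_mul_node_pow (by omega : m - i ≤ m - k), if_neg (by omega),
        zero_mul, zero_smul]

lemma norm_coeff_le (hm : 2 ≤ m) (hk : k ≤ m)
    (h : ∀ s ∈ Set.Icc (-1 : ℝ) 1, ∀ t ∈ Set.Icc (-1 : ℝ) 1,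
      ‖∑ i ∈ range (m + 1), (s ^ (m - i) * t ^ i) • c i‖ ≤ C) :
    ‖c k‖ ≤ 2 ^ (m - 2) * C := by
  have hC : 0 ≤ C := (norm_nonneg _).trans (h 0 (by simp) 0 (by simp))
  have le_of_le (hle : ‖c k‖ ≤ C) : ‖c k‖ ≤ 2 ^ (m - 2) * C :=
    hle.trans (le_mul_of_one_le_left hC (one_le_pow₀ one_le_two))
  rcases k.eq_zero_or_pos with rfl | hk₀
  · have h₀ := h 1 (by simp) 0 (by simp)
    rw [sum_eq_single_of_mem 0 (by simp) fun i _ hi ↦ by simp [hi]] at h₀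
    exact le_of_le (by simpa using h₀)
  rcases hk.eq_or_lt with rfl | hkm
  · have h₀ := h 0 (by simp) 1 (by simp)
    rw [sum_eq_single_of_mem k (by simp) fun i hi hik ↦ by
      rw [zero_pow (by have := mem_range_succ_iff.1 hi; omega), zero_mul, zero_smul]] at h₀
    exact le_of_le (by simpa using h₀)
  rw [coeff_eq_sum_leadingCoeffWeight hk c]
  calc _ ≤ ∑ a ∈ range (m - k + 1), ∑ b ∈ range (k + 1),
        |leadingCoeffWeight (m - k) a| * |leadingCoeffWeight k b| * C := by
        refine norm_sum_le_of_le _ fun a _ ↦ norm_sum_le_of_le _ fun b _ ↦ ?_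
        rw [norm_smul, Real.norm_eq_abs, abs_mul]
        gcongr
        exact h _ node_mem_Icc _ node_mem_Icc
    _ = 2 ^ (m - k - 1) * 2 ^ (k - 1) * C := by
        simp only [← sum_mul, ← mul_sum, sum_abs_leadingCoeffWeight]
    _ = 2 ^ (m - 2) * C := by
        rw [← pow_add, show m - k - 1 + (k - 1) = m - 2 by omega]

end Coefficients

lemma ClarksonInequality.norm_map_add_add_norm_map_sub_le {E G : Type*} [NormedAddCommGroup E]
    [NormedAddCommGroup G] {m : ℕ} {M s : ℝ} {P : E → G} (h : ClarksonInequality E m s)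
    (hM : 0 ≤ M) (hP : ∀ u, ‖P u‖ ≤ M * ‖u‖ ^ m) (a b : E) :
    ‖P (a + b)‖ + ‖P (a - b)‖ ≤ 2 * (M * (‖a‖ ^ s + ‖b‖ ^ s) ^ (m / s)) := by
  have hab := h a b
  simp only [Real.rpow_natCast] at hab
  linarith [hP (a + b), hP (a - b), mul_le_mul_of_nonneg_left hab hM]

section Polynomial

open Finset

variable {E G : Type*} [NormedAddCommGroup E] [NormedSpace ℝ E] [NormedAddCommGroup G]
  [NormedSpace ℝ G] {m : ℕ}

/-- The coefficient of `s ^ (m - i) * t ^ i` in `L (s • x + t • y, …, s • x + t • y)`. For symmetric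
`L` it is `m.choose i` times `L (x, …, x, y, …, y)` with `i` entries `y`; summing over the positions
of these entries makes symmetry superfluous. -/
def mixedCoeff (L : ContinuousMultilinearMap ℝ (fun _ : Fin m ↦ E) G) (x y : E) (i : ℕ) : G :=
  ∑ S ∈ powersetCard i univ, L (S.piecewise (fun _ ↦ y) (fun _ ↦ x))

variable (L : ContinuousMultilinearMap ℝ (fun _ : Fin m ↦ E) G) (x y : E)

lemma map_piecewise_smul (S : Finset (Fin m)) (s t : ℝ) :
    L (S.piecewise (fun _ ↦ t • y) (fun _ ↦ s • x)) =
      (s ^ (m - #S) * t ^ #S) • L (S.piecewise (fun _ ↦ y) (fun _ ↦ x)) := by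
  have h := L.map_smul_univ (S.piecewise (fun _ ↦ t) (fun _ ↦ s))
    (S.piecewise (fun _ ↦ y) (fun _ ↦ x))
  rw [prod_piecewise, prod_const, prod_const, univ_inter, ← compl_eq_univ_sdiff, card_compl,
    Fintype.card_fin, mul_comm] at h
  rw [← h]
  congr 1
  ext i
  by_cases hi : i ∈ S <;> simp [hi]

lemma mixedCoeff_smul (s t : ℝ) (i : ℕ) :
    mixedCoeff L (s • x) (t • y) i = (s ^ (m - i) * t ^ i) • mixedCoeff L x y i := by
  rw [mixedCoeff, mixedCoeff, smul_sum]
  refine sum_congr rfl fun S hS ↦ ?_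
  rw [map_piecewise_smul, (mem_powersetCard.1 hS).2]

lemma map_add_eq_sum_mixedCoeff :
    L (fun _ ↦ x + y) = ∑ i ∈ range (m + 1), mixedCoeff L x y i := by
  have h := L.map_add_univ (fun _ ↦ y) (fun _ ↦ x)
  simp only [Pi.add_def, add_comm y x] at h
  rw [h, ← powerset_univ, sum_powerset]
  simp only [mixedCoeff, card_univ, Fintype.card_fin]

lemma map_smul_add_smul_eq_sum (s t : ℝ) :
    L (fun _ ↦ s • x + t • y) =
      ∑ i ∈ range (m + 1), (s ^ (m - i) * t ^ i) • mixedCoeff L x y i := by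
  simp only [map_add_eq_sum_mixedCoeff, mixedCoeff_smul]

lemma iteratedFDeriv_diagonal_eq_smul_mixedCoeff {k : ℕ} (hk : k ≤ m) :
    iteratedFDeriv ℝ k (fun u ↦ L fun _ ↦ u) x (fun _ ↦ y) = k.factorial • mixedCoeff L x y k := by
  have hsmooth : ContDiff ℝ k (fun z ↦ L fun _ ↦ x + z) :=
    L.contDiff.comp (contDiff_pi.2 fun _ ↦ contDiff_const.add contDiff_id)
  have hline : iteratedDeriv k (fun t : ℝ ↦ L fun _ ↦ x + t • y) 0 =
      iteratedFDeriv ℝ k (fun u ↦ L fun _ ↦ u) x (fun _ ↦ y) := by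
    have h := ((ContinuousLinearMap.id ℝ ℝ).smulRight y).iteratedFDeriv_comp_right hsmooth (0 : ℝ)
      le_rfl
    rw [iteratedFDeriv_comp_add_left (f := fun u ↦ L fun _ ↦ u)] at h
    simpa [iteratedDeriv_eq_iteratedFDeriv, Function.comp_def] using congr($h fun _ ↦ 1)
  have hexpand (t : ℝ) :
      L (fun _ ↦ x + t • y) = ∑ i ∈ range (m + 1), t ^ i • mixedCoeff L x y i := by
    simpa only [one_smul, one_pow, one_mul] using map_smul_add_smul_eq_sum L x y 1 t
  have hmonomial (i : ℕ) : iteratedDeriv k (fun t : ℝ ↦ t ^ i • mixedCoeff L x y i) 0 =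
      if i = k then k.factorial • mixedCoeff L x y i else 0 := by
    rw [iteratedDeriv_smul_const (by fun_prop), iteratedDeriv_fun_pow_zero]
    rcases eq_or_ne i k with rfl | hik
    · rw [if_pos rfl, if_pos rfl, Nat.cast_smul_eq_nsmul]
    · rw [if_neg hik.symm, if_neg hik, Nat.cast_zero, zero_smul]
  rw [← hline]
  simp only [hexpand]
  rw [iteratedDeriv_fun_sum fun i _ ↦ by fun_prop]
  simp only [hmonomial, sum_ite_eq', mem_range_succ_iff, if_pos hk]

variable {L x y} {k : ℕ} {M s : ℝ}

lemma norm_map_diagonal_le_sSup_mul (L : ContinuousMultilinearMap ℝ (fun _ : Fin m ↦ E) G) (u : E) :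
    ‖L fun _ ↦ u‖ ≤ sSup ((fun v ↦ ‖L fun _ ↦ v‖) '' closedBall 0 1) * ‖u‖ ^ m := by
  have hbdd : BddAbove ((fun v ↦ ‖L fun _ ↦ v‖) '' closedBall 0 1) := by
    refine ⟨‖L‖, ?_⟩
    rintro _ ⟨v, hv, rfl⟩
    rw [mem_closedBall_zero_iff] at hv
    simpa using L.le_opNorm_mul_pow_of_le (m := fun _ ↦ v) ((pi_norm_const_le v).trans hv)
  have hunit : ‖L fun _ ↦ ‖u‖⁻¹ • u‖ ≤ sSup ((fun v ↦ ‖L fun _ ↦ v‖) '' closedBall 0 1) := by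
    refine le_csSup hbdd ⟨‖u‖⁻¹ • u, mem_closedBall_zero_iff.2 ?_, rfl⟩
    rw [norm_smul, norm_inv, norm_norm]
    exact inv_mul_le_one
  have hscale : u = ‖u‖ • ‖u‖⁻¹ • u := by
    rcases eq_or_ne u 0 with rfl | hu
    · simp
    · rw [smul_inv_smul₀ (norm_ne_zero_iff.2 hu)]
  have hhom : (L fun _ ↦ u) = ‖u‖ ^ m • L fun _ ↦ ‖u‖⁻¹ • u := by
    conv_lhs => rw [hscale]
    simpa using L.map_smul_univ (fun _ ↦ ‖u‖) fun _ ↦ ‖u‖⁻¹ • u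
  rw [hhom, norm_smul, norm_pow, norm_norm, mul_comm]
  gcongr

lemma norm_mixedCoeff_le (h : ClarksonInequality E m s) (hs : 0 < s) (hm : 2 ≤ m) (hk : k ≤ m)
    (hM : 0 ≤ M) (hL : ∀ u, ‖L fun _ ↦ u‖ ≤ M * ‖u‖ ^ m) :
    ‖mixedCoeff L x y k‖ ≤ 2 ^ (m - 2) * (M * (‖x‖ ^ s + ‖y‖ ^ s) ^ (m / s)) := by
  have hsymm (σ τ : ℝ) : ∑ i ∈ range (m + 1), (σ ^ (m - i) * τ ^ i) •
      ((1 + (-1) ^ (k + i)) / 2 : ℝ) • mixedCoeff L x y i =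
      (1 / 2 : ℝ) • ((L fun _ ↦ σ • x + τ • y) + (-1 : ℝ) ^ k • L fun _ ↦ σ • x - τ • y) := by
    simp only [sub_eq_add_neg, ← neg_smul, map_smul_add_smul_eq_sum, smul_sum, smul_smul,
      ← sum_add_distrib, ← add_smul]
    refine sum_congr rfl fun i _ ↦ ?_
    rw [neg_pow τ]
    ring_nf
  have hbound (σ : ℝ) (hσ : σ ∈ Set.Icc (-1 : ℝ) 1) (τ : ℝ) (hτ : τ ∈ Set.Icc (-1 : ℝ) 1) :
      ‖∑ i ∈ range (m + 1), (σ ^ (m - i) * τ ^ i) •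
        ((1 + (-1) ^ (k + i)) / 2 : ℝ) • mixedCoeff L x y i‖
        ≤ M * (‖x‖ ^ s + ‖y‖ ^ s) ^ (m / s) := by
    have norm_smul_le_norm {t : ℝ} (ht : t ∈ Set.Icc (-1 : ℝ) 1) (z : E) : ‖t • z‖ ≤ ‖z‖ := by
      rw [norm_smul]
      exact mul_le_of_le_one_left (norm_nonneg z) (abs_le.2 ht)
    calc _ ≤ (1 / 2) * (‖L fun _ ↦ σ • x + τ • y‖ + ‖L fun _ ↦ σ • x - τ • y‖) := by
          rw [hsymm, norm_smul, Real.norm_of_nonneg one_half_pos.le]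
          gcongr
          refine (norm_add_le _ _).trans_eq ?_
          rw [norm_smul, norm_pow, norm_neg, norm_one, one_pow, one_mul]
      _ ≤ M * (‖σ • x‖ ^ s + ‖τ • y‖ ^ s) ^ (m / s) := by
          linarith [h.norm_map_add_add_norm_map_sub_le hM hL (σ • x) (τ • y)]
      _ ≤ M * (‖x‖ ^ s + ‖y‖ ^ s) ^ (m / s) := by
          gcongr
          exacts [norm_smul_le_norm hσ x, norm_smul_le_norm hτ y]
  have hk_coeff : ((1 + (-1) ^ (k + k)) / 2 : ℝ) = 1 := by
    rw [Even.neg_one_pow ⟨k, rfl⟩]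
    norm_num
  simpa only [hk_coeff, one_smul] using norm_coeff_le hm hk hbound

lemma markovC_nonneg (hk : k ≤ m) : 0 ≤ markovC k m s := by
  have : (0 : ℝ) ≤ m - k := sub_nonneg.2 (by exact_mod_cast hk)
  unfold markovC
  positivity

lemma factorial_mul_norm_mixedCoeff_le (h : ClarksonInequality E m s) (hs : 0 < s) (hm : 2 ≤ m)
    (hk : k ≤ m) (hM : 0 ≤ M) (hL : ∀ u, ‖L fun _ ↦ u‖ ≤ M * ‖u‖ ^ m) (hx : ‖x‖ ≤ 1)
    (hy : ‖y‖ ≤ 1) :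
    k.factorial * ‖mixedCoeff L x y k‖ ≤ 2 ^ (m - 2) * markovC k m s * M := by
  have hmk : (0 : ℝ) ≤ m - k := sub_nonneg.2 (by exact_mod_cast hk)
  have root_pow {t : ℝ} (ht : 0 ≤ t) : (t ^ (1 / s)) ^ s = t := by
    rw [← Real.rpow_mul ht, one_div_mul_cancel hs.ne', Real.rpow_one]
  have norm_root_smul_rpow_le {t : ℝ} (ht : 0 ≤ t) {z : E} (hz : ‖z‖ ≤ 1) :
      ‖t ^ (1 / s) • z‖ ^ s ≤ t := by
    rw [norm_smul, Real.norm_of_nonneg (by positivity)]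
    exact (Real.rpow_le_rpow (by positivity) (mul_le_of_le_one_right (by positivity) hz)
      hs.le).trans_eq (root_pow ht)
  have root_pow_nat {t : ℝ} (ht : 0 ≤ t) (n : ℕ) : (t ^ (1 / s)) ^ n = t ^ (n / s) := by
    rw [← Real.rpow_mul_natCast ht, one_div_mul_eq_div]
  set D : ℝ := ((m : ℝ) - k) ^ (((m : ℝ) - k) / s) * (k : ℝ) ^ ((k : ℝ) / s) with hD
  have hD₀ : 0 < D := by
    have rpow_div_pos {t : ℝ} (ht : 0 ≤ t) : 0 < t ^ (t / s) := by
      rcases ht.eq_or_lt with rfl | ht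
      · simp
      · positivity
    exact mul_pos (rpow_div_pos hmk) (rpow_div_pos k.cast_nonneg)
  have hscaled := norm_mixedCoeff_le (x := ((m : ℝ) - k) ^ (1 / s) • x)
    (y := (k : ℝ) ^ (1 / s) • y) h hs hm hk hM hL
  rw [mixedCoeff_smul, root_pow_nat hmk, root_pow_nat k.cast_nonneg, Nat.cast_sub hk, ← hD,
    norm_smul, Real.norm_of_nonneg hD₀.le] at hscaled
  have hsum : ‖((m : ℝ) - k) ^ (1 / s) • x‖ ^ s + ‖(k : ℝ) ^ (1 / s) • y‖ ^ s ≤ m := by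
    linarith [norm_root_smul_rpow_le hmk hx, norm_root_smul_rpow_le k.cast_nonneg hy]
  calc k.factorial * ‖mixedCoeff L x y k‖ = k.factorial / D * (D * ‖mixedCoeff L x y k‖) := by
        field_simp
    _ ≤ k.factorial / D * (2 ^ (m - 2) * (M * (m : ℝ) ^ (m / s))) := by
        refine mul_le_mul_of_nonneg_left (hscaled.trans ?_) (by positivity)
        gcongr
    _ = 2 ^ (m - 2) * markovC k m s * M := by
        rw [markovC, ← hD]
        ring

lemma sSup_norm_iteratedFDeriv_diagonal_le (h : ClarksonInequality E m s) (hs : 0 < s)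
    (hm : 2 ≤ m) (hk : k ≤ m) (hx : ‖x‖ ≤ 1) :
    sSup ((fun y ↦ ‖iteratedFDeriv ℝ k (fun u ↦ L fun _ ↦ u) x (fun _ ↦ y)‖) '' closedBall 0 1)
      ≤ 2 ^ (m - 2) * markovC k m s * sSup ((fun y ↦ ‖L fun _ ↦ y‖) '' closedBall 0 1) := by
  refine csSup_le ((nonempty_closedBall.2 zero_le_one).image _) ?_
  rintro _ ⟨y, hy, rfl⟩
  simp only [iteratedFDeriv_diagonal_eq_smul_mixedCoeff L x y hk]
  rw [← Nat.cast_smul_eq_nsmul ℝ, norm_smul, Real.norm_natCast]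
  refine factorial_mul_norm_mixedCoeff_le h hs hm hk (Real.sSup_nonneg ?_)
    (norm_map_diagonal_le_sSup_mul L) hx (mem_closedBall_zero_iff.1 hy)
  rintro _ ⟨v, -, rfl⟩
  exact norm_nonneg _

end Polynomial

theorem markov_homogeneous_Lp_real_general {α : Type*} [MeasurableSpace α] {μ : Measure α}
    {H G : Type*} [NormedAddCommGroup H] [InnerProductSpace ℝ H] [NormedAddCommGroup G]
    [NormedSpace ℝ G] {m k : ℕ} (hm : 2 ≤ m) (hk : k ≤ m) {p : ℝ≥0∞} [Fact (1 ≤ p)]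
    {F : Lp H p μ → G}
    (hF : ∃ L : ContinuousMultilinearMap ℝ (fun _ : Fin m ↦ Lp H p μ) G, ∀ u, F u = L fun _ ↦ u)
    {r : ℝ} (hr : IsRegimeExponent m p r) {x : Lp H p μ} (hx : ‖x‖ ≤ 1) :
    sSup ((fun y ↦ ‖iteratedFDeriv ℝ k F x (fun _ ↦ y)‖) '' closedBall 0 1)
      ≤ 2 ^ (m - 2) * markovC k m r * sSup ((fun y ↦ ‖F y‖) '' closedBall 0 1) := by
  obtain ⟨L, hL⟩ := hF
  obtain rfl : F = fun u ↦ L fun _ ↦ u := funext hL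
  exact sSup_norm_iteratedFDeriv_diagonal_le (hr.clarksonInequality_lp hm) (hr.pos hm) hm hk hx

/-- Markov-type inequality for an `m`-homogeneous polynomial on a real `L_p(μ)` space:
`sup_{‖x‖_p ≤ 1} ‖D̂^k L̂(x)‖ ≤ 2^{m-1} C_{k,m} ‖L̂‖`, where the constant `C_{k,m}` uses the
regime exponent `p` for `1 ≤ p ≤ m'`, `m' = m/(m-1)` for `m' ≤ p ≤ m`, and
`p' = p/(p-1)` for `m ≤ p ≤ ∞`. -/
theorem markov_homogeneous_Lp_real
    {α : Type*} [MeasurableSpace α] (μ : Measure α)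
    (m k : ℕ) (hm : 2 ≤ m) (hk : k ≤ m) (p : ℝ≥0∞) [Fact (1 ≤ p)]
    (F : Lp ℝ p μ → ℝ)
    (hF : ∃ L : ContinuousMultilinearMap ℝ (fun _ : Fin m => Lp ℝ p μ) ℝ,
      (∀ (σ : Equiv.Perm (Fin m)) (v : Fin m → Lp ℝ p μ), L (v ∘ σ) = L v) ∧
      ∀ u, F u = L (fun _ => u)) :
    (p ≤ ENNReal.ofReal ((m : ℝ) / ((m : ℝ) - 1)) →
      ∀ x : Lp ℝ p μ, ‖x‖ ≤ 1 →
        sSup ((fun y => ‖iteratedFDeriv ℝ k F x (fun _ => y)‖) '' closedBall (0 : Lp ℝ p μ) 1)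
          ≤ (2 : ℝ) ^ (m - 1) * markovC k m p.toReal
              * sSup ((fun y => ‖F y‖) '' closedBall (0 : Lp ℝ p μ) 1)) ∧
    (ENNReal.ofReal ((m : ℝ) / ((m : ℝ) - 1)) ≤ p → p ≤ (m : ℝ≥0∞) →
      ∀ x : Lp ℝ p μ, ‖x‖ ≤ 1 →
        sSup ((fun y => ‖iteratedFDeriv ℝ k F x (fun _ => y)‖) '' closedBall (0 : Lp ℝ p μ) 1)
          ≤ (2 : ℝ) ^ (m - 1) * markovC k m ((m : ℝ) / ((m : ℝ) - 1))
              * sSup ((fun y => ‖F y‖) '' closedBall (0 : Lp ℝ p μ) 1)) ∧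
    ((m : ℝ≥0∞) ≤ p →
      ∀ x : Lp ℝ p μ, ‖x‖ ≤ 1 →
        sSup ((fun y => ‖iteratedFDeriv ℝ k F x (fun _ => y)‖) '' closedBall (0 : Lp ℝ p μ) 1)
          ≤ (2 : ℝ) ^ (m - 1) * markovC k m (conjExp p)
              * sSup ((fun y => ‖F y‖) '' closedBall (0 : Lp ℝ p μ) 1)) := by
  obtain ⟨L, -, hL⟩ := hF
  have bound {r : ℝ} (hr : IsRegimeExponent m p r) (x : Lp ℝ p μ) (hx : ‖x‖ ≤ 1) :
      sSup ((fun y ↦ ‖iteratedFDeriv ℝ k F x (fun _ ↦ y)‖) '' closedBall 0 1)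
        ≤ 2 ^ (m - 1) * markovC k m r * sSup ((fun y ↦ ‖F y‖) '' closedBall 0 1) := by
    refine (markov_homogeneous_Lp_real_general hm hk ⟨L, hL⟩ hr hx).trans ?_
    have hF₀ : 0 ≤ sSup ((fun y ↦ ‖F y‖) '' closedBall 0 1) :=
      Real.sSup_nonneg (Set.forall_mem_image.2 fun _ _ ↦ norm_nonneg _)
    have hC₀ : 0 ≤ markovC k m r := markovC_nonneg hk
    gcongr <;> norm_num
  exact ⟨fun h ↦ bound (.low h), fun h₁ h₂ ↦ bound (.mid h₁ h₂), fun h ↦ bound (.high h)⟩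
end

section
/- Let m ≥ 2 and let L be a continuous symmetric m-linear form on a real or complex L_p(μ) space, with associated m-homogeneous polynomial L̂(x) = L(x,…,x). Then ‖L‖ ≤ (m^{m/p}/m!)·‖L̂‖ if 1 ≤ p ≤ m′, ‖L‖ ≤ (m^{m/m′}/m!)·‖L̂‖ = (m^{m−1}/m!)·‖L̂‖ if m′ ≤ p ≤ m, and ‖L‖ ≤ (m^{m/p′}/m!)·‖L̂‖ if m ≤ p ≤ ∞, where m′ = m/(m−1) and p′ = p/(p−1). -/
open Metric MeasureTheory
open scoped ENNReal

/-! By polarization, `2 ^ m * m! * L x` is a signed sum of the values of `L̂` at `∑ i, e i • x i`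
over all choices of signs `e`, so it suffices to bound the average of `‖∑ i, e i • x i‖ ^ m` over
`e`, for `x i` in the unit ball. If `r ≥ 2` has conjugate exponent `s`, then by Clarkson's
inequality, iterated over the signs, the average of `‖∑ i, e i • x i‖ ^ r` for `x i` in a Hilbert
space is at most `(∑ i, ‖x i‖ ^ s) ^ (r - 1)`. When `p ≤ r`, Minkowski's integral inequality and a
comparison of power means turn this into the bound `m ^ (r / u)` in the unit ball of `L_p`, for
every `u ≤ min s p`. The theorem takes `r = m` for `p ≤ m` and `r = p` for `m ≤ p < ∞`, with the
largest admissible `u`; for `p = ∞` the triangle inequality suffices. -/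

open scoped Nat

section PowerMeans

variable {ι : Type*} [Fintype ι]

lemma rpow_sum_le_sum_rpow {b : ι → ℝ} (hb : ∀ i, 0 ≤ b i) {u : ℝ} (hu₀ : 0 < u) (hu₁ : u ≤ 1) :
    (∑ i, b i) ^ u ≤ ∑ i, b i ^ u :=
  Finset.le_sum_of_subadditive_on_pred (· ^ u) (0 ≤ ·) (Real.zero_rpow hu₀.ne').le
    (fun _ _ hx hy => Real.rpow_add_le_add_rpow hx hy hu₀.le hu₁) (fun _ _ => add_nonneg)
    b fun i _ => hb i

lemma rpow_sum_rpow_le_card_rpow_mul {a : ι → ℝ} (ha : ∀ i, 0 ≤ a i) {s t u : ℝ}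
    (hu : 0 < u) (hus : u ≤ s) (hut : u ≤ t) :
    (∑ i, a i ^ s) ^ (t / s) ≤ (Fintype.card ι : ℝ) ^ (t / u - 1) * ∑ i, a i ^ t := by
  have hs : 0 < s := hu.trans_le hus
  have ht : 0 < t := hu.trans_le hut
  have has : ∀ i, 0 ≤ a i ^ s := fun i => Real.rpow_nonneg (ha i) s
  have hat : ∀ i, (a i ^ s) ^ (t / s) = a i ^ t := fun i => by
    rw [← Real.rpow_mul (ha i), mul_div_cancel₀ _ hs.ne']
  have hsum : 0 ≤ ∑ i, a i ^ t := Finset.sum_nonneg fun i _ => Real.rpow_nonneg (ha i) t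
  rcases isEmpty_or_nonempty ι with _ | _
  · simp [Real.zero_rpow (div_pos ht hs).ne']
  have hcard : (1 : ℝ) ≤ Fintype.card ι := mod_cast Fintype.card_pos
  rcases le_total (t / s) 1 with hts | hts
  · calc (∑ i, a i ^ s) ^ (t / s) ≤ ∑ i, a i ^ t := by
          simpa only [hat] using rpow_sum_le_sum_rpow has (div_pos ht hs) hts
      _ ≤ (Fintype.card ι : ℝ) ^ (t / u - 1) * ∑ i, a i ^ t :=
          le_mul_of_one_le_left hsum <| Real.one_le_rpow hcard <|
            sub_nonneg.2 ((one_le_div hu).2 hut)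
  · calc (∑ i, a i ^ s) ^ (t / s) ≤ (Fintype.card ι : ℝ) ^ (t / s - 1) * ∑ i, a i ^ t := by
          simpa only [hat, Finset.card_univ] using
            Real.rpow_sum_le_const_mul_sum_rpow_of_nonneg Finset.univ hts fun i _ => has i
      _ ≤ (Fintype.card ι : ℝ) ^ (t / u - 1) * ∑ i, a i ^ t := by gcongr

lemma sum_rpow_le_card_mul_rpow_of_le {X : ι → ℝ} (hX : ∀ i, 0 ≤ X i) {s t B : ℝ} (hs : 0 < s)
    (hst : s ≤ t) (hB : 0 ≤ B) (h : ∑ i, X i ^ t ≤ Fintype.card ι * B ^ t) :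
    ∑ i, X i ^ s ≤ Fintype.card ι * B ^ s := by
  have ht : 0 < t := hs.trans_le hst
  have hXs : 0 ≤ ∑ i, X i ^ s := Finset.sum_nonneg fun i _ => Real.rpow_nonneg (hX i) s
  rcases isEmpty_or_nonempty ι with _ | _
  · simp
  have hcard : (0 : ℝ) < Fintype.card ι := mod_cast Fintype.card_pos
  refine (Real.rpow_le_rpow_iff hXs (by positivity) (div_pos ht hs)).1 ?_
  calc (∑ i, X i ^ s) ^ (t / s)
      ≤ (Fintype.card ι : ℝ) ^ (t / s - 1) * ∑ i, X i ^ t :=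
        rpow_sum_rpow_le_card_rpow_mul hX hs le_rfl hst
    _ ≤ (Fintype.card ι : ℝ) ^ (t / s - 1) * (Fintype.card ι * B ^ t) := by gcongr
    _ = (Fintype.card ι * B ^ s) ^ (t / s) := by
        rw [Real.mul_rpow hcard.le (by positivity), ← Real.rpow_mul hB, mul_div_cancel₀ _ hs.ne',
          ← mul_assoc, ← Real.rpow_add_one hcard.ne', sub_add_cancel]

lemma sum_add_rpow_le_card_mul_rpow {X : ι → ℝ} (hX : ∀ i, 0 ≤ X i) {t a B : ℝ} (ht : 1 ≤ t)
    (ha : 0 ≤ a) (hB : 0 ≤ B) (h : ∑ i, X i ^ t ≤ Fintype.card ι * B ^ t) :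
    ∑ i, (a + X i) ^ t ≤ Fintype.card ι * (a + B) ^ t := by
  have ht₀ : 0 < t := zero_lt_one.trans_le ht
  have haX : 0 ≤ ∑ i, (a + X i) ^ t :=
    Finset.sum_nonneg fun i _ => Real.rpow_nonneg (add_nonneg ha (hX i)) t
  have hroot : ∀ {y : ℝ}, 0 ≤ y →
      (Fintype.card ι * y ^ t) ^ (1 / t) = (Fintype.card ι : ℝ) ^ (1 / t) * y := fun hy => by
    rw [Real.mul_rpow (by positivity) (by positivity), ← Real.rpow_mul hy,
      mul_one_div_cancel ht₀.ne', Real.rpow_one]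
  refine (Real.rpow_le_rpow_iff haX (by positivity) (one_div_pos.2 ht₀)).1 ?_
  calc (∑ i, (a + X i) ^ t) ^ (1 / t)
      ≤ (∑ _i : ι, a ^ t) ^ (1 / t) + (∑ i, X i ^ t) ^ (1 / t) :=
        Real.Lp_add_le_of_nonneg Finset.univ ht (fun _ _ => ha) fun i _ => hX i
    _ ≤ (Fintype.card ι * a ^ t) ^ (1 / t) + (Fintype.card ι * B ^ t) ^ (1 / t) := by
        rw [Finset.sum_const, Finset.card_univ, nsmul_eq_mul]
        gcongr
        exact Finset.sum_nonneg fun i _ => Real.rpow_nonneg (hX i) t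
    _ = (Fintype.card ι * (a + B) ^ t) ^ (1 / t) := by
        rw [hroot ha, hroot hB, hroot (add_nonneg ha hB), mul_add]

end PowerMeans

section TwoPoint

/-- Friedrichs' interpolation: at `s = 1` and at `s = c ^ (p - 1)` the function takes the values on
the two sides of Clarkson's inequality for the numbers `1` and `c`. -/
lemma antitoneOn_add_sub_rpow_interpolation {q c : ℝ} (hq : 2 ≤ q) (hc₀ : 0 ≤ c) (hc₁ : c ≤ 1) :
    AntitoneOn (fun s : ℝ => (1 + s ^ (1 - q) * c) * (1 + s * c) ^ (q - 1) +
      (1 - s ^ (1 - q) * c) * (1 - s * c) ^ (q - 1)) (Set.Ioc 0 1) := by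
  have hderiv : ∀ s ∈ Set.Ioc (0 : ℝ) 1, HasDerivAt
      (fun s : ℝ => (1 + s ^ (1 - q) * c) * (1 + s * c) ^ (q - 1) +
        (1 - s ^ (1 - q) * c) * (1 - s * c) ^ (q - 1))
      ((q - 1) * c * ((1 - s ^ (-q)) * ((1 + s * c) ^ (q - 2) - (1 - s * c) ^ (q - 2)))) s := by
    rintro s ⟨hs₀, hs₁⟩
    have hsc : s * c ≤ 1 := mul_le_one₀ hs₁ hc₀ hc₁
    have hpow : ∀ {y : ℝ}, 0 ≤ y → y ^ (q - 1) = y ^ (q - 2) * y := fun hy => by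
      rw [← Real.rpow_add_one' hy (by linarith)]
      ring_nf
    have hs : s ^ (1 - q) = s ^ (-q) * s := by
      rw [← Real.rpow_add_one hs₀.ne']
      ring_nf
    have hdA : HasDerivAt (fun s : ℝ => s ^ (1 - q) * c) ((1 - q) * s ^ (-q) * c) s := by
      simpa using (Real.hasDerivAt_rpow_const (p := 1 - q) (Or.inl hs₀.ne')).mul_const c
    have hdc : HasDerivAt (fun s : ℝ => s * c) c s := hasDerivAt_mul_const c
    have hd := ((hdA.const_add 1).mul ((hdc.const_add 1).rpow_const (p := q - 1)
      (Or.inr (by linarith)))).add ((hdA.const_sub 1).mul ((hdc.const_sub 1).rpow_const (p := q - 1)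
      (Or.inr (by linarith))))
    refine hd.congr_deriv ?_
    rw [hs, hpow (by positivity), hpow (sub_nonneg.2 hsc), show q - 1 - 1 = q - 2 by ring]
    ring
  refine antitoneOn_of_deriv_nonpos (convex_Ioc 0 1)
    (fun s hs => (hderiv s hs).continuousAt.continuousWithinAt) (fun s hs => ?_) fun s hs => ?_
  · exact (hderiv s (interior_subset hs)).differentiableAt.differentiableWithinAt
  obtain ⟨hs₀, hs₁⟩ := interior_subset hs
  rw [(hderiv s ⟨hs₀, hs₁⟩).deriv]
  have hsc : s * c ≤ 1 := mul_le_one₀ hs₁ hc₀ hc₁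
  refine mul_nonpos_of_nonneg_of_nonpos (mul_nonneg (by linarith) hc₀)
    (mul_nonpos_of_nonpos_of_nonneg ?_ ?_)
  · exact sub_nonpos.2 (Real.one_le_rpow_of_pos_of_le_one_of_nonpos hs₀ hs₁ (by linarith))
  · refine sub_nonneg.2 (Real.rpow_le_rpow (by linarith) ?_ (by linarith))
    linarith [mul_nonneg hs₀.le hc₀]

variable {p q : ℝ}

lemma one_add_rpow_add_one_sub_rpow_le_s14 (hpq : p.HolderConjugate q) (hq : 2 ≤ q) {c : ℝ}
    (hc₀ : 0 ≤ c) (hc₁ : c ≤ 1) :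
    (1 + c) ^ q + (1 - c) ^ q ≤ 2 * (1 + c ^ p) ^ (q - 1) := by
  have hp : 0 < p - 1 := hpq.sub_one_pos
  rcases hc₀.eq_or_lt with rfl | hc
  · simp [Real.zero_rpow hpq.ne_zero, one_add_one_eq_two]
  have hle := antitoneOn_add_sub_rpow_interpolation hq hc₀ hc₁
    ⟨Real.rpow_pos_of_pos hc (p - 1), Real.rpow_le_one hc₀ hc₁ hp.le⟩ ⟨one_pos, le_rfl⟩
    (Real.rpow_le_one hc₀ hc₁ hp.le)
  have hinv : (c ^ (p - 1)) ^ (1 - q) * c = 1 := by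
    rw [← Real.rpow_mul hc₀, ← Real.rpow_add_one hc.ne',
      show (p - 1) * (1 - q) + 1 = 0 by linear_combination -hpq.mul_eq_add, Real.rpow_zero]
  have hpow : c ^ (p - 1) * c = c ^ p := by rw [← Real.rpow_add_one hc.ne', sub_add_cancel]
  have hq' : ∀ {y : ℝ}, 0 ≤ y → y * y ^ (q - 1) = y ^ q := fun hy => by
    rw [mul_comm, ← Real.rpow_add_one' hy (by linarith), sub_add_cancel]
  simpa [hinv, hpow, hq' (add_nonneg zero_le_one hc₀), hq' (sub_nonneg.2 hc₁),
    one_add_one_eq_two] using hle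

lemma add_rpow_add_abs_sub_rpow_le_s14 (hpq : p.HolderConjugate q) (hq : 2 ≤ q) {x y : ℝ}
    (hx : 0 ≤ x) (hy : 0 ≤ y) :
    (x + y) ^ q + |x - y| ^ q ≤ 2 * (x ^ p + y ^ p) ^ (q - 1) := by
  wlog hyx : y ≤ x generalizing x y
  · simpa only [add_comm x, abs_sub_comm x, add_comm (x ^ p)] using this hy hx (le_of_not_ge hyx)
  rcases hx.eq_or_lt with rfl | hx₀
  · obtain rfl : y = 0 := le_antisymm hyx hy
    simp [Real.zero_rpow hpq.ne_zero, Real.zero_rpow hpq.symm.ne_zero,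
      Real.zero_rpow hpq.symm.sub_one_pos.ne']
  obtain ⟨c, rfl⟩ : ∃ c, y = x * c := ⟨y / x, by field_simp⟩
  have hc₀ : 0 ≤ c := nonneg_of_mul_nonneg_right hy hx₀
  have hc₁ : c ≤ 1 := le_of_mul_le_mul_left (by simpa using hyx) hx₀
  calc (x + x * c) ^ q + |x - x * c| ^ q = x ^ q * ((1 + c) ^ q + (1 - c) ^ q) := by
        rw [abs_of_nonneg (sub_nonneg.2 hyx), ← mul_one_add, ← mul_one_sub,
          Real.mul_rpow hx (by linarith), Real.mul_rpow hx (by linarith), mul_add]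
    _ ≤ x ^ q * (2 * (1 + c ^ p) ^ (q - 1)) := by
        gcongr
        exact one_add_rpow_add_one_sub_rpow_le_s14 hpq hq hc₀ hc₁
    _ = 2 * (x ^ p + (x * c) ^ p) ^ (q - 1) := by
        rw [Real.mul_rpow hx hc₀, ← mul_one_add, Real.mul_rpow (by positivity) (by positivity),
          ← Real.rpow_mul hx, mul_comm p, hpq.symm.sub_one_mul_conj]
        ring

variable {H : Type*} [NormedAddCommGroup H] [InnerProductSpace ℝ H]

lemma norm_add_rpow_add_norm_sub_rpow_le_add_rpow_add_abs_sub_rpow (hq : 2 ≤ q)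
    (a b : H) :
    ‖a + b‖ ^ q + ‖a - b‖ ^ q ≤ (‖a‖ + ‖b‖) ^ q + |‖a‖ - ‖b‖| ^ q := by
  have hsq : ∀ {y : ℝ}, 0 ≤ y → (y ^ 2) ^ (q / 2) = y ^ q := fun hy => by
    rw [← Real.rpow_natCast, ← Real.rpow_mul hy, Nat.cast_ofNat, mul_div_cancel₀ _ two_ne_zero]
  have hconv := convexOn_rpow (p := q / 2) (by linarith)
  have hadd : (0 : ℝ) ≤ (‖a‖ + ‖b‖) ^ 2 := by positivity
  have hsub : (0 : ℝ) ≤ |‖a‖ - ‖b‖| ^ 2 := by positivity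
  obtain ⟨u, v, hu, hv, huv, hinner⟩ : ∃ u v : ℝ, 0 ≤ u ∧ 0 ≤ v ∧ u + v = 1 ∧
      u • (-(‖a‖ * ‖b‖)) + v • (‖a‖ * ‖b‖) = inner ℝ a b := by
    have hmem := Set.mem_Icc.2 (abs_le.1 (abs_real_inner_le_norm a b))
    rwa [← segment_eq_Icc (by linarith [mul_nonneg (norm_nonneg a) (norm_nonneg b)])] at hmem
  simp only [smul_eq_mul] at hinner
  have hpos : ‖a + b‖ ^ 2 = u * |‖a‖ - ‖b‖| ^ 2 + v * (‖a‖ + ‖b‖) ^ 2 := by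
    rw [norm_add_sq_real, sq_abs]
    linear_combination (-‖a‖ ^ 2 - ‖b‖ ^ 2) * huv - 2 * hinner
  have hneg : ‖a - b‖ ^ 2 = u * (‖a‖ + ‖b‖) ^ 2 + v * |‖a‖ - ‖b‖| ^ 2 := by
    rw [norm_sub_sq_real, sq_abs]
    linear_combination (-‖a‖ ^ 2 - ‖b‖ ^ 2) * huv + 2 * hinner
  have hle_pos := hconv.2 hsub hadd hu hv huv
  have hle_neg := hconv.2 hadd hsub hu hv huv
  simp only [smul_eq_mul, ← hpos, ← hneg, hsq, norm_nonneg, abs_nonneg, add_nonneg]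
    at hle_pos hle_neg
  calc ‖a + b‖ ^ q + ‖a - b‖ ^ q
      ≤ (u + v) * ((‖a‖ + ‖b‖) ^ q + |‖a‖ - ‖b‖| ^ q) := by linarith
    _ = (‖a‖ + ‖b‖) ^ q + |‖a‖ - ‖b‖| ^ q := by rw [huv, one_mul]

lemma norm_add_rpow_add_norm_sub_rpow_le_two_mul (hpq : p.HolderConjugate q) (hq : 2 ≤ q)
    (a b : H) :
    ‖a + b‖ ^ q + ‖a - b‖ ^ q ≤ 2 * (‖a‖ ^ p + ‖b‖ ^ p) ^ (q - 1) :=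
  (norm_add_rpow_add_norm_sub_rpow_le_add_rpow_add_abs_sub_rpow hq a b).trans
    (add_rpow_add_abs_sub_rpow_le_s14 hpq hq (norm_nonneg a) (norm_nonneg b))

lemma sum_norm_sum_units_zsmul_rpow_le (hpq : p.HolderConjugate q) (hq : 2 ≤ q) {n : ℕ}
    (a : Fin n → H) :
    ∑ e : Fin n → ℤˣ, ‖∑ i, e i • a i‖ ^ q ≤ 2 ^ n * (∑ i, ‖a i‖ ^ p) ^ (q - 1) := by
  have hrpow : ∀ {y : ℝ}, 0 ≤ y → (y ^ p) ^ (q - 1) = y ^ q := fun hy => by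
    rw [← Real.rpow_mul hy, mul_comm, hpq.symm.sub_one_mul_conj]
  induction n with
  | zero => simp [Real.zero_rpow hpq.symm.ne_zero, Real.zero_rpow hpq.symm.sub_one_pos.ne']
  | succ n ih =>
    set S : (Fin n → ℤˣ) → H := fun e => ∑ i, e i • a i.succ
    calc ∑ e : Fin (n + 1) → ℤˣ, ‖∑ i, e i • a i‖ ^ q
        = ∑ e : Fin n → ℤˣ, (‖a 0 + S e‖ ^ q + ‖a 0 - S e‖ ^ q) := by
          rw [← (Fin.consEquiv fun _ => ℤˣ).sum_comp, Fintype.sum_prod_type_right]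
          refine Finset.sum_congr rfl fun e _ => ?_
          rw [norm_sub_rev]
          simp [Fin.consEquiv, Fin.sum_univ_succ, UnitsInt.univ, neg_add_eq_sub, S]
      _ ≤ ∑ e : Fin n → ℤˣ, 2 * (‖a 0‖ ^ p + ‖S e‖ ^ p) ^ (q - 1) := by
          gcongr with e
          exact norm_add_rpow_add_norm_sub_rpow_le_two_mul hpq hq _ _
      _ = 2 * ∑ e : Fin n → ℤˣ, (‖a 0‖ ^ p + ‖S e‖ ^ p) ^ (q - 1) := by rw [Finset.mul_sum]
      _ ≤ 2 * (2 ^ n * (‖a 0‖ ^ p + ∑ i : Fin n, ‖a i.succ‖ ^ p) ^ (q - 1)) := by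
          gcongr
          simpa [hrpow] using sum_add_rpow_le_card_mul_rpow (X := fun e => ‖S e‖ ^ p)
            (fun e => by positivity) (by linarith) (by positivity) (by positivity)
            (by simpa [hrpow] using ih fun i => a i.succ)
      _ = 2 ^ (n + 1) * (∑ i, ‖a i‖ ^ p) ^ (q - 1) := by
          rw [Fin.sum_univ_succ, pow_succ']
          ring

end TwoPoint

section Lp

variable {α : Type*} [MeasurableSpace α] {μ : Measure α} {ι : Type*} [Fintype ι]

lemma rpow_sum_norm_integral_rpow_le {E : Type*} [NormedAddCommGroup E] [NormedSpace ℝ E]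
    [CompleteSpace E] {f : ι → α → E} (hf : ∀ i, Integrable (f i) μ) {s : ℝ} (hs : 1 ≤ s) :
    (∑ i, ‖∫ t, f i t ∂μ‖ ^ s) ^ (1 / s) ≤ ∫ t, (∑ i, ‖f i t‖ ^ s) ^ (1 / s) ∂μ := by
  have : Fact (1 ≤ ENNReal.ofReal s) := ⟨ENNReal.one_le_ofReal.2 hs⟩
  have hs' : (ENNReal.ofReal s).toReal = s := ENNReal.toReal_ofReal (by linarith)
  have hnorm : ∀ v : PiLp (ENNReal.ofReal s) fun _ : ι => E, ‖v‖ = (∑ i, ‖v i‖ ^ s) ^ (1 / s) :=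
    fun v => by simp only [PiLp.norm_eq_sum (hs'.symm ▸ zero_lt_one.trans_le hs), hs']
  simpa only [hnorm, eval_integral_piLp
      (f := fun t => WithLp.toLp (ENNReal.ofReal s) fun i => f i t) hf] using
    norm_integral_le_integral_norm (μ := μ)
      fun t => WithLp.toLp (ENNReal.ofReal s) fun i => f i t

variable {E : Type*} [NormedAddCommGroup E] {p : ℝ≥0∞}

lemma coeFn_sum_units_zsmul (e : ι → ℤˣ) (x : ι → Lp E p μ) :
    ⇑(∑ i, e i • x i) =ᵐ[μ] fun t => ∑ i, e i • x i t := by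
  have hsmul : ∀ i, ⇑(e i • x i) =ᵐ[μ] e i • ⇑(x i) := fun i => by
    rcases Int.units_eq_one_or (e i) with h | h
    · simp [h]
    · simpa [h] using Lp.coeFn_neg (x i)
  filter_upwards [Lp.coeFn_finsetSum Finset.univ fun i => e i • x i, ae_all_iff.2 hsmul]
    with t hsum hsmul
  rw [hsum, Finset.sum_apply]
  exact Finset.sum_congr rfl fun i _ => hsmul i

variable [Fact (1 ≤ p)]

lemma Lp_norm_rpow_eq_integral (hp : p ≠ ∞) (f : Lp E p μ) :
    ‖f‖ ^ p.toReal = ∫ t, ‖f t‖ ^ p.toReal ∂μ := by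
  have hp₀ : p ≠ 0 := (zero_lt_one.trans_le Fact.out).ne'
  rw [Lp.norm_def, (Lp.memLp f).eLpNorm_eq_integral_rpow_norm hp₀ hp,
    ENNReal.toReal_ofReal (by positivity),
    Real.rpow_inv_rpow (by positivity) (ENNReal.toReal_pos hp₀ hp).ne']

lemma integrable_Lp_norm_rpow (hp : p ≠ ∞) (f : Lp E p μ) :
    Integrable (fun t => ‖f t‖ ^ p.toReal) μ :=
  (Lp.memLp f).integrable_norm_rpow (zero_lt_one.trans_le Fact.out).ne' hp

lemma rpow_sum_Lp_norm_rpow_le_integral (hp : p ≠ ∞) {r : ℝ} (hpr : p.toReal ≤ r)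
    (y : ι → Lp E p μ) :
    (∑ i, ‖y i‖ ^ r) ^ (p.toReal / r) ≤ ∫ t, (∑ i, ‖y i t‖ ^ r) ^ (p.toReal / r) ∂μ := by
  have hp₀ : 0 < p.toReal := ENNReal.toReal_pos (zero_lt_one.trans_le Fact.out).ne' hp
  have hpow : ∀ z : E, ‖‖z‖ ^ p.toReal‖ ^ (r / p.toReal) = ‖z‖ ^ r := fun z => by
    rw [Real.norm_of_nonneg (by positivity), ← Real.rpow_mul (norm_nonneg z),
      mul_div_cancel₀ _ hp₀.ne']
  have hpow' : ∀ i, ‖∫ t, ‖y i t‖ ^ p.toReal ∂μ‖ ^ (r / p.toReal) = ‖y i‖ ^ r := fun i => by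
    rw [← Lp_norm_rpow_eq_integral hp, Real.norm_of_nonneg (by positivity),
      ← Real.rpow_mul (norm_nonneg _), mul_div_cancel₀ _ hp₀.ne']
  simpa only [hpow, hpow', one_div_div] using
    rpow_sum_norm_integral_rpow_le (fun i => integrable_Lp_norm_rpow hp (y i))
      ((one_le_div hp₀).2 hpr)

variable {H : Type*} [NormedAddCommGroup H] [InnerProductSpace ℝ H] {n : ℕ} {r s u : ℝ}

lemma rpow_sum_norm_sum_units_zsmul_rpow_le (hrs : r.HolderConjugate s) (hr : 2 ≤ r)
    (hu : 0 < u) (hus : u ≤ s) {P : ℝ} (huP : u ≤ P) (a : Fin n → H) :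
    (∑ e : Fin n → ℤˣ, ‖∑ i, e i • a i‖ ^ r) ^ (P / r) ≤
      (2 ^ n) ^ (P / r) * ((n : ℝ) ^ (P / u - 1) * ∑ i, ‖a i‖ ^ P) := by
  have hP : 0 < P := hu.trans_le huP
  have hr₀ : 0 < r := hrs.pos
  have hexp : (r - 1) * (P / r) = P / s := by
    rw [mul_div_assoc', div_eq_div_iff hr₀.ne' hrs.symm.ne_zero]
    linear_combination P * hrs.sub_one_mul_conj
  calc (∑ e : Fin n → ℤˣ, ‖∑ i, e i • a i‖ ^ r) ^ (P / r)
      ≤ (2 ^ n * (∑ i, ‖a i‖ ^ s) ^ (r - 1)) ^ (P / r) := by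
        gcongr
        exact sum_norm_sum_units_zsmul_rpow_le hrs.symm hr a
    _ = (2 ^ n) ^ (P / r) * (∑ i, ‖a i‖ ^ s) ^ (P / s) := by
        rw [Real.mul_rpow (by positivity) (by positivity), ← Real.rpow_mul (by positivity), hexp]
    _ ≤ (2 ^ n) ^ (P / r) * ((n : ℝ) ^ (P / u - 1) * ∑ i, ‖a i‖ ^ P) := by
        gcongr
        simpa using rpow_sum_rpow_le_card_rpow_mul (fun i => norm_nonneg (a i)) hu hus huP

lemma sum_Lp_norm_sum_units_zsmul_rpow_le (hp : p ≠ ∞) (hrs : r.HolderConjugate s)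
    (hr : 2 ≤ r) (hpr : p.toReal ≤ r) (hu : 0 < u) (hus : u ≤ s) (hup : u ≤ p.toReal)
    {x : Fin n → Lp H p μ} (hx : ∀ i, ‖x i‖ ≤ 1) :
    ∑ e : Fin n → ℤˣ, ‖∑ i, e i • x i‖ ^ r ≤ 2 ^ n * ((n : ℝ) ^ u⁻¹) ^ r := by
  have hp₀ : 0 < p.toReal := hu.trans_le hup
  have hr₀ : 0 < r := hrs.pos
  have hint := fun i => integrable_Lp_norm_rpow hp (x i)
  have hsum : ∑ i, ∫ t, ‖x i t‖ ^ p.toReal ∂μ ≤ n := by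
    calc ∑ i, ∫ t, ‖x i t‖ ^ p.toReal ∂μ ≤ ∑ _i : Fin n, (1 : ℝ) :=
          Finset.sum_le_sum fun i _ => by
            rw [← Lp_norm_rpow_eq_integral hp]
            exact Real.rpow_le_one (norm_nonneg _) (hx i) hp₀.le
      _ = n := by simp
  refine (Real.rpow_le_rpow_iff (by positivity) (by positivity) (div_pos hp₀ hr₀)).1 ?_
  calc (∑ e : Fin n → ℤˣ, ‖∑ i, e i • x i‖ ^ r) ^ (p.toReal / r)
      ≤ ∫ t, (∑ e : Fin n → ℤˣ, ‖(∑ i, e i • x i : Lp H p μ) t‖ ^ r) ^ (p.toReal / r) ∂μ :=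
        rpow_sum_Lp_norm_rpow_le_integral hp hpr _
    _ ≤ ∫ t, (2 ^ n) ^ (p.toReal / r) *
          ((n : ℝ) ^ (p.toReal / u - 1) * ∑ i, ‖x i t‖ ^ p.toReal) ∂μ := by
        refine integral_mono_of_nonneg (.of_forall fun t => by positivity)
          (((integrable_finsetSum _ fun i _ => hint i).const_mul _).const_mul _) ?_
        filter_upwards [ae_all_iff.2 fun e => coeFn_sum_units_zsmul e x] with t ht
        simpa only [ht] using
          rpow_sum_norm_sum_units_zsmul_rpow_le hrs hr hu hus hup fun i => x i t
    _ = (2 ^ n) ^ (p.toReal / r) *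
          ((n : ℝ) ^ (p.toReal / u - 1) * ∑ i, ∫ t, ‖x i t‖ ^ p.toReal ∂μ) := by
        rw [integral_const_mul, integral_const_mul, integral_finsetSum _ fun i _ => hint i]
    _ ≤ (2 ^ n) ^ (p.toReal / r) * ((n : ℝ) ^ (p.toReal / u - 1) * n) := by gcongr
    _ = (2 ^ n * ((n : ℝ) ^ u⁻¹) ^ r) ^ (p.toReal / r) := by
        have hpu : p.toReal / u - 1 + 1 ≠ 0 := by simpa using ⟨hp₀.ne', hu.ne'⟩
        rw [← Real.rpow_add_one' n.cast_nonneg hpu, sub_add_cancel, div_eq_inv_mul _ u,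
          Real.mul_rpow (by positivity) (by positivity), ← Real.rpow_mul (by positivity),
          ← Real.rpow_mul (by positivity), mul_div_cancel₀ _ hr₀.ne']

end Lp

section PolynomialNorm

variable {ι 𝕜 : Type*} [RCLike 𝕜]

lemma exists_norm_le_one_norm_smul_eq {E : Type*} [NormedAddCommGroup E] [NormedSpace 𝕜 E]
    (x : E) : ∃ y : E, ‖y‖ ≤ 1 ∧ (‖x‖ : 𝕜) • y = x := by
  rcases eq_or_ne x 0 with rfl | hx
  · exact ⟨0, by simp, by simp⟩
  · refine ⟨(‖x‖⁻¹ : 𝕜) • x, (norm_smul_inv_norm hx).le, smul_inv_smul₀ ?_ x⟩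
    simpa using hx

variable {E : Type*} [NormedAddCommGroup E] [NormedSpace 𝕜 E]
  {F : Type*} [SeminormedAddCommGroup F] [NormedSpace 𝕜 F]

/-- The norm `‖L̂‖` of the homogeneous polynomial `L̂ u = L (u, …, u)` associated with `L`, as a
supremum over the closed unit ball; the set of values is bounded because `L` is continuous. -/
noncomputable def polynomialNorm (L : ContinuousMultilinearMap 𝕜 (fun _ : ι => E) F) : ℝ :=
  sSup ((fun u => ‖L (fun _ => u)‖) '' closedBall (0 : E) 1)

namespace polynomialNorm

variable (L : ContinuousMultilinearMap 𝕜 (fun _ : ι => E) F)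

lemma norm_apply_le [Finite ι] {u : E} (hu : ‖u‖ ≤ 1) : ‖L fun _ => u‖ ≤ polynomialNorm L := by
  have := Fintype.ofFinite ι
  refine le_csSup ⟨‖L‖, ?_⟩ ⟨u, mem_closedBall_zero_iff.2 hu, rfl⟩
  rintro _ ⟨v, hv, rfl⟩
  simpa using L.le_mul_prod_of_opNorm_le_of_le le_rfl fun _ => mem_closedBall_zero_iff.1 hv

lemma nonneg : 0 ≤ polynomialNorm L :=
  Real.sSup_nonneg <| by
    rintro _ ⟨u, -, rfl⟩
    exact norm_nonneg _

lemma norm_apply_le_mul_pow [Fintype ι] (u : E) :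
    ‖L fun _ => u‖ ≤ polynomialNorm L * ‖u‖ ^ Fintype.card ι := by
  obtain ⟨y, hy, hu⟩ := exists_norm_le_one_norm_smul_eq (𝕜 := 𝕜) u
  calc ‖L fun _ => u‖ = ‖u‖ ^ Fintype.card ι * ‖L fun _ => y‖ := by
        rw [← hu, L.map_smul_univ (fun _ => (‖u‖ : 𝕜)) fun _ => y, norm_smul]
        simp [hu]
    _ ≤ polynomialNorm L * ‖u‖ ^ Fintype.card ι := by
        rw [mul_comm]
        gcongr
        exact norm_apply_le L hy

end polynomialNorm

end PolynomialNorm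

section Polarization

variable {ι : Type*} [Fintype ι]

lemma sum_prod_units_mul_prod_units_comp [DecidableEq ι] (r : ι → ι) :
    ∑ e : ι → ℤˣ, (((∏ i, e i) * ∏ j, e (r j) : ℤˣ) : ℤ) =
      if Function.Bijective r then 2 ^ Fintype.card ι else 0 := by
  let χ : (ι → ℤˣ) →* ℤ :=
    (Units.coeHom ℤ).comp
      { toFun := fun e => (∏ i, e i) * ∏ j, e (r j)
        map_one' := by simp
        map_mul' := fun e e' => by simp [Finset.prod_mul_distrib, mul_mul_mul_comm] }
  split_ifs with hr
  · have hone : ∀ e : ι → ℤˣ, (∏ i, e i) * ∏ j, e (r j) = 1 := fun e => by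
      rw [hr.prod_comp e, Int.units_mul_self]
    simp [hone]
  · obtain ⟨k, hk⟩ : ∃ k, ∀ j, r j ≠ k := by
      simpa [Function.Surjective] using fun h => hr (Finite.surjective_iff_bijective.1 h)
    refine sum_hom_units_eq_zero χ fun hχ => ?_
    have hχk : χ (Pi.mulSingle k (-1)) = -1 := by
      simp [χ, Pi.mulSingle_eq_of_ne (hk _)]
    simp [hχ] at hχk

lemma sum_prod_units_smul_map_sum_units_zsmul [DecidableEq ι] {E F : Type*} [AddCommGroup E]
    [AddCommGroup F] {f : MultilinearMap ℤ (fun _ : ι => E) F}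
    (hf : ∀ (σ : Equiv.Perm ι) (x : ι → E), f (x ∘ σ) = f x) (x : ι → E) :
    ∑ e : ι → ℤˣ, (∏ i, e i) • f (fun _ => ∑ i, e i • x i) =
      (2 ^ Fintype.card ι * (Fintype.card ι)!) • f x := by
  have hexpand : ∀ e : ι → ℤˣ, (∏ i, e i) • f (fun _ => ∑ i, e i • x i) =
      ∑ r : ι → ι, (((∏ i, e i) * ∏ j, e (r j) : ℤˣ) : ℤ) • f (x ∘ r) := fun e => by
    rw [f.map_sum fun _ i => e i • x i, Finset.smul_sum]
    refine Finset.sum_congr rfl fun r _ => ?_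
    simp only [Units.smul_def]
    rw [f.map_smul_univ (fun j => (e (r j) : ℤ)) fun j => x (r j), smul_smul]
    simp [Function.comp_def]
  calc ∑ e : ι → ℤˣ, (∏ i, e i) • f (fun _ => ∑ i, e i • x i)
      = ∑ r : ι → ι,
          (if Function.Bijective r then 2 ^ Fintype.card ι else (0 : ℤ)) • f (x ∘ r) := by
        simp only [hexpand]
        rw [Finset.sum_comm]
        simp only [← Finset.sum_smul, sum_prod_units_mul_prod_units_comp]
    _ = ∑ r : {r : ι → ι // Function.Bijective r}, (2 ^ Fintype.card ι : ℤ) • f (x ∘ r) := by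
        simp only [ite_smul, zero_smul, ← Finset.sum_filter]
        exact Finset.sum_subtype _ (by simp) _
    _ = ∑ σ : Equiv.Perm ι, (2 ^ Fintype.card ι : ℤ) • f (x ∘ σ) :=
        Equiv.bijectiveEquiv.sum_comp fun σ : Equiv.Perm ι => (2 ^ Fintype.card ι : ℤ) • f (x ∘ σ)
    _ = (2 ^ Fintype.card ι * (Fintype.card ι)!) • f x := by
        simp only [hf, Finset.sum_const, Finset.card_univ, Fintype.card_perm]
        rw [mul_comm, mul_smul]
        norm_cast

variable {𝕜 : Type*} [RCLike 𝕜]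

lemma opNorm_le_of_forall_norm_le_one {E : ι → Type*} [∀ i, NormedAddCommGroup (E i)]
    [∀ i, NormedSpace 𝕜 (E i)] {F : Type*} [SeminormedAddCommGroup F] [NormedSpace 𝕜 F]
    {L : ContinuousMultilinearMap 𝕜 E F} {C : ℝ} (hC : 0 ≤ C)
    (h : ∀ x : ∀ i, E i, (∀ i, ‖x i‖ ≤ 1) → ‖L x‖ ≤ C) : ‖L‖ ≤ C := by
  refine L.opNorm_le_bound hC fun x => ?_
  choose y hy hxy using fun i => exists_norm_le_one_norm_smul_eq (𝕜 := 𝕜) (x i)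
  calc ‖L x‖ = (∏ i, ‖x i‖) * ‖L y‖ := by
        rw [← funext hxy, L.map_smul_univ, norm_smul]
        simp [hxy]
    _ ≤ C * ∏ i, ‖x i‖ := by
        rw [mul_comm]
        gcongr
        exact h y hy

variable {E : Type*} [NormedAddCommGroup E] [NormedSpace 𝕜 E]
  {F : Type*} [SeminormedAddCommGroup F] [NormedSpace 𝕜 F]
  {L : ContinuousMultilinearMap 𝕜 (fun _ : ι => E) F}

lemma norm_apply_le_sum_norm_sum_units_zsmul_pow [DecidableEq ι]
    (hsym : ∀ (σ : Equiv.Perm ι) (x : ι → E), L (x ∘ σ) = L x) (x : ι → E) :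
    2 ^ Fintype.card ι * (Fintype.card ι)! * ‖L x‖ ≤
      polynomialNorm L * ∑ e : ι → ℤˣ, ‖∑ i, e i • x i‖ ^ Fintype.card ι := by
  have hpolar : ∑ e : ι → ℤˣ, (∏ i, e i) • L (fun _ => ∑ i, e i • x i) =
      (2 ^ Fintype.card ι * (Fintype.card ι)!) • L x :=
    sum_prod_units_smul_map_sum_units_zsmul (f := L.toMultilinearMap.restrictScalars ℤ) hsym x
  calc 2 ^ Fintype.card ι * (Fintype.card ι)! * ‖L x‖
      = ‖∑ e : ι → ℤˣ, (∏ i, e i) • L fun _ => ∑ i, e i • x i‖ := by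
        rw [hpolar]
        simp [← Nat.cast_smul_eq_nsmul 𝕜, norm_smul]
    _ ≤ ∑ e : ι → ℤˣ, ‖L fun _ => ∑ i, e i • x i‖ :=
        norm_sum_le_of_le _ fun e _ => (norm_units_zsmul _ _).le
    _ ≤ polynomialNorm L * ∑ e : ι → ℤˣ, ‖∑ i, e i • x i‖ ^ Fintype.card ι := by
        rw [Finset.mul_sum]
        gcongr with e
        exact polynomialNorm.norm_apply_le_mul_pow L _

lemma opNorm_le_of_sum_norm_sum_units_zsmul_rpow_le [DecidableEq ι] [Nonempty ι]
    (hsym : ∀ (σ : Equiv.Perm ι) (x : ι → E), L (x ∘ σ) = L x) {r B : ℝ}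
    (hr : Fintype.card ι ≤ r) (hB : 0 ≤ B)
    (h : ∀ x : ι → E, (∀ i, ‖x i‖ ≤ 1) →
      ∑ e : ι → ℤˣ, ‖∑ i, e i • x i‖ ^ r ≤ 2 ^ Fintype.card ι * B ^ r) :
    ‖L‖ ≤ B ^ Fintype.card ι / (Fintype.card ι)! * polynomialNorm L := by
  have hK := polynomialNorm.nonneg L
  refine opNorm_le_of_forall_norm_le_one (by positivity) fun x hx => ?_
  have hmoment : ∑ e : ι → ℤˣ, ‖∑ i, e i • x i‖ ^ Fintype.card ι ≤
      2 ^ Fintype.card ι * B ^ Fintype.card ι := by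
    have hcard : (Fintype.card (ι → ℤˣ) : ℝ) = 2 ^ Fintype.card ι := by simp
    have hle := sum_rpow_le_card_mul_rpow_of_le (X := fun e : ι → ℤˣ => ‖∑ i, e i • x i‖)
      (fun e => norm_nonneg _) (Nat.cast_pos.2 (Fintype.card_pos (α := ι))) hr hB
      (hcard ▸ h x hx)
    simpa only [hcard, Real.rpow_natCast] using hle
  have hle : 2 ^ Fintype.card ι * ((Fintype.card ι)! * ‖L x‖) ≤
      2 ^ Fintype.card ι * (B ^ Fintype.card ι * polynomialNorm L) := by
    linarith [norm_apply_le_sum_norm_sum_units_zsmul_pow hsym x,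
      mul_le_mul_of_nonneg_left hmoment hK]
  rw [div_mul_eq_mul_div, le_div_iff₀ (by positivity), mul_comm]
  exact le_of_mul_le_mul_left hle (by positivity)

lemma opNorm_le_card_pow_div_factorial_mul_polynomialNorm [Nonempty ι]
    (hsym : ∀ (σ : Equiv.Perm ι) (x : ι → E), L (x ∘ σ) = L x) :
    ‖L‖ ≤ (Fintype.card ι : ℝ) ^ Fintype.card ι / (Fintype.card ι)! * polynomialNorm L := by
  classical
  refine opNorm_le_of_sum_norm_sum_units_zsmul_rpow_le hsym le_rfl (by positivity) fun x hx => ?_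
  have hnorm : ∀ e : ι → ℤˣ, ‖∑ i, e i • x i‖ ≤ Fintype.card ι := fun e => by
    simpa using norm_sum_le_of_le Finset.univ fun i _ =>
      (norm_units_zsmul (e i) (x i)).trans_le (hx i)
  calc ∑ e : ι → ℤˣ, ‖∑ i, e i • x i‖ ^ (Fintype.card ι : ℝ)
      ≤ ∑ _e : ι → ℤˣ, (Fintype.card ι : ℝ) ^ (Fintype.card ι : ℝ) := by
        gcongr with e
        exact hnorm e
    _ = 2 ^ Fintype.card ι * (Fintype.card ι : ℝ) ^ (Fintype.card ι : ℝ) := by simp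

end Polarization

section Exponents

lemma div_sub_one_le_self {x : ℝ} (hx : 2 ≤ x) : x / (x - 1) ≤ x :=
  div_le_self (by linarith) (by linarith)

lemma rpow_div_div_sub_one_eq_pow_sub_one {m : ℕ} (hm : m ≠ 0) :
    (m : ℝ) ^ ((m : ℝ) / ((m : ℝ) / ((m : ℝ) - 1))) = (m : ℝ) ^ (m - 1 : ℕ) := by
  rw [div_div_cancel₀ (mod_cast hm), ← Real.rpow_natCast, Nat.cast_pred (Nat.pos_of_ne_zero hm)]

end Exponents

section Main

variable {𝕜 : Type*} [RCLike 𝕜] {α : Type*} [MeasurableSpace α] {μ : Measure α} {m : ℕ}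
  {p : ℝ≥0∞} [Fact (1 ≤ p)] {H : Type*} [NormedAddCommGroup H] [InnerProductSpace 𝕜 H]
  {F : Type*} [SeminormedAddCommGroup F] [NormedSpace 𝕜 F]
  {L : ContinuousMultilinearMap 𝕜 (fun _ : Fin m => Lp H p μ) F}

lemma Lp_opNorm_le_rpow_div_factorial_mul_polynomialNorm (hm : 2 ≤ m)
    (hsym : ∀ (σ : Equiv.Perm (Fin m)) (x : Fin m → Lp H p μ), L (x ∘ σ) = L x) (hp : p ≠ ∞)
    {r s u : ℝ} (hrs : r.HolderConjugate s) (hmr : m ≤ r) (hpr : p.toReal ≤ r) (hu : 0 < u)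
    (hus : u ≤ s) (hup : u ≤ p.toReal) :
    ‖L‖ ≤ (m : ℝ) ^ (m / u) / m ! * polynomialNorm L := by
  let := InnerProductSpace.rclikeToReal 𝕜 H
  have : NeZero m := ⟨by omega⟩
  have hr : 2 ≤ r := le_trans (mod_cast hm) hmr
  have hpow : ((m : ℝ) ^ u⁻¹) ^ m = (m : ℝ) ^ (m / u) := by
    rw [← Real.rpow_mul_natCast m.cast_nonneg, div_eq_inv_mul]
  rw [← hpow]
  simpa using opNorm_le_of_sum_norm_sum_units_zsmul_rpow_le hsym (r := r) (B := (m : ℝ) ^ u⁻¹)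
    (by simpa using hmr) (by positivity) fun x hx => by
      simpa using sum_Lp_norm_sum_units_zsmul_rpow_le hp hrs hr hpr hu hus hup hx

theorem polarization_Lp_general (hm : 2 ≤ m)
    (hsym : ∀ (σ : Equiv.Perm (Fin m)) (x : Fin m → Lp H p μ), L (x ∘ σ) = L x) :
    (p ≤ ENNReal.ofReal ((m : ℝ) / ((m : ℝ) - 1)) →
      ‖L‖ ≤ (m : ℝ) ^ ((m : ℝ) / p.toReal) / (m ! : ℝ) * polynomialNorm L) ∧
    (ENNReal.ofReal ((m : ℝ) / ((m : ℝ) - 1)) ≤ p → p ≤ (m : ℝ≥0∞) →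
      ‖L‖ ≤ (m : ℝ) ^ ((m : ℝ) / ((m : ℝ) / ((m : ℝ) - 1))) / (m ! : ℝ) * polynomialNorm L ∧
        (m : ℝ) ^ ((m : ℝ) / ((m : ℝ) / ((m : ℝ) - 1))) = (m : ℝ) ^ (m - 1 : ℕ)) ∧
    ((m : ℝ≥0∞) ≤ p →
      ‖L‖ ≤ (m : ℝ) ^ ((m : ℝ) / conjExp p) / (m ! : ℝ) * polynomialNorm L) := by
  have hm₂ : (2 : ℝ) ≤ m := mod_cast hm
  have hconj : (m : ℝ).HolderConjugate (m / (m - 1)) := .conjExponent (by linarith)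
  have hconj_le : (m / (m - 1) : ℝ) ≤ m := div_sub_one_le_self hm₂
  refine ⟨fun hpm => ?_, fun hmp hpm => ⟨?_, rpow_div_div_sub_one_eq_pow_sub_one (by omega)⟩,
    fun hmp => ?_⟩
  · have hp : p ≠ ∞ := ne_top_of_le_ne_top ENNReal.ofReal_ne_top hpm
    have hpm' : p.toReal ≤ m / (m - 1) := ENNReal.toReal_le_of_le_ofReal hconj.symm.nonneg hpm
    exact Lp_opNorm_le_rpow_div_factorial_mul_polynomialNorm hm hsym hp hconj le_rfl
      (hpm'.trans hconj_le) (ENNReal.toReal_pos (zero_lt_one.trans_le Fact.out).ne' hp) hpm' le_rfl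
  · have hp : p ≠ ∞ := ne_top_of_le_ne_top (ENNReal.natCast_ne_top m) hpm
    exact Lp_opNorm_le_rpow_div_factorial_mul_polynomialNorm hm hsym hp hconj le_rfl
      (by simpa using ENNReal.toReal_mono (ENNReal.natCast_ne_top m) hpm) hconj.symm.pos le_rfl
      ((ENNReal.ofReal_le_iff_le_toReal hp).1 hmp)
  · rcases eq_or_ne p ∞ with rfl | hp
    · have : NeZero m := ⟨by omega⟩
      simpa [conjExp] using opNorm_le_card_pow_div_factorial_mul_polynomialNorm hsym
    have hmp' : (m : ℝ) ≤ p.toReal := by simpa using ENNReal.toReal_mono hp hmp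
    have hconj_p : p.toReal.HolderConjugate (p.toReal / (p.toReal - 1)) :=
      .conjExponent (by linarith)
    simpa [conjExp, hp] using Lp_opNorm_le_rpow_div_factorial_mul_polynomialNorm hm hsym hp hconj_p
      hmp' le_rfl hconj_p.symm.pos le_rfl (div_sub_one_le_self (hm₂.trans hmp'))

end Main

/-- Polarization estimates on real or complex `L_p(μ)`: a continuous symmetric
`m`-linear form `L` with associated `m`-homogeneous polynomial `L̂` satisfies
`‖L‖ ≤ (m^{m/p}/m!) ‖L̂‖` for `1 ≤ p ≤ m'`,
`‖L‖ ≤ (m^{m/m'}/m!) ‖L̂‖ = (m^{m-1}/m!) ‖L̂‖` for `m' ≤ p ≤ m`, and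
`‖L‖ ≤ (m^{m/p'}/m!) ‖L̂‖` for `m ≤ p ≤ ∞`, where `m' = m/(m-1)`, `p' = p/(p-1)`. -/
theorem polarization_Lp
    {𝕜 : Type*} [RCLike 𝕜] {α : Type*} [MeasurableSpace α] (μ : Measure α)
    (m : ℕ) (hm : 2 ≤ m) (p : ℝ≥0∞) [Fact (1 ≤ p)]
    (L : ContinuousMultilinearMap 𝕜 (fun _ : Fin m => Lp 𝕜 p μ) 𝕜)
    (hsym : ∀ (σ : Equiv.Perm (Fin m)) (v : Fin m → Lp 𝕜 p μ), L (v ∘ σ) = L v) :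
    (p ≤ ENNReal.ofReal ((m : ℝ) / ((m : ℝ) - 1)) →
      ‖L‖ ≤ (m : ℝ) ^ ((m : ℝ) / p.toReal) / (m.factorial : ℝ)
          * sSup ((fun u => ‖L (fun _ => u)‖) '' closedBall (0 : Lp 𝕜 p μ) 1)) ∧
    (ENNReal.ofReal ((m : ℝ) / ((m : ℝ) - 1)) ≤ p → p ≤ (m : ℝ≥0∞) →
      ‖L‖ ≤ (m : ℝ) ^ ((m : ℝ) / ((m : ℝ) / ((m : ℝ) - 1))) / (m.factorial : ℝ)
          * sSup ((fun u => ‖L (fun _ => u)‖) '' closedBall (0 : Lp 𝕜 p μ) 1) ∧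
        (m : ℝ) ^ ((m : ℝ) / ((m : ℝ) / ((m : ℝ) - 1))) = (m : ℝ) ^ (m - 1 : ℕ)) ∧
    ((m : ℝ≥0∞) ≤ p →
      ‖L‖ ≤ (m : ℝ) ^ ((m : ℝ) / conjExp p) / (m.factorial : ℝ)
          * sSup ((fun u => ‖L (fun _ => u)‖) '' closedBall (0 : Lp 𝕜 p μ) 1)) :=
  polarization_Lp_general hm hsym
end

section
/- Let 2 ≤ p < ∞. On the real sequence space ℓ_p, the symmetric bilinear form L(x,y) = x₁y₁ − x₂y₂, with associated 2-homogeneous polynomial L̂(x) = x₁² − x₂², satisfies ‖L̂‖ = 1 and ‖L‖ = 2^{(p−2)/p} = 2^{(p−2)/p}·‖L̂‖; consequently the 2nd polarization constant of real ℓ_p is at least 2^{(p−2)/p}. -/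
open Metric
open scoped ENNReal

/-!
On the unit ball of real `ℓ_p` the squares `x₁²` and `x₂²` lie in `[0, 1]`, so their difference is
at most `1` in absolute value, with equality at `e₁`. For the bilinear form, Cauchy–Schwarz followed
by the power mean inequality `x₁² + x₂² ≤ 2 ^ ((p - 2) / p) ‖x‖²` gives the upper bound, and the
pair `e₁ + e₂`, `e₁ - e₂`, whose members have norm `2 ^ (1 / p)`, attains it.
-/

section LpEstimates

variable {ι : Type*} {E : ι → Type*} [∀ i, NormedAddCommGroup (E i)] {p : ℝ≥0∞}

lemma sum_norm_rpow_le_card_rpow_mul_norm_rpow {q : ℝ} (hq : 0 < q) (hqp : q ≤ p.toReal)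
    (x : lp E p) (s : Finset ι) :
    ∑ i ∈ s, ‖x i‖ ^ q ≤ (s.card : ℝ) ^ ((p.toReal - q) / p.toReal) * ‖x‖ ^ q := by
  have hp : 0 < p.toReal := hq.trans_le hqp
  have hr : 0 < p.toReal / q := div_pos hp hq
  have hx : 0 ≤ ‖x‖ := lp.norm_nonneg' x
  have rpow_div {t : ℝ} (ht : 0 ≤ t) : (t ^ q) ^ (p.toReal / q) = t ^ p.toReal := by
    rw [← Real.rpow_mul ht, mul_div_cancel₀ _ hq.ne']
  refine (Real.rpow_le_rpow_iff (by positivity)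
    (mul_nonneg (by positivity) (Real.rpow_nonneg hx q)) hr).mp ?_
  calc (∑ i ∈ s, ‖x i‖ ^ q) ^ (p.toReal / q)
      ≤ (s.card : ℝ) ^ (p.toReal / q - 1) * ∑ i ∈ s, (‖x i‖ ^ q) ^ (p.toReal / q) :=
        Real.rpow_sum_le_const_mul_sum_rpow_of_nonneg _ ((one_le_div hq).mpr hqp)
          fun i _ ↦ by positivity
    _ = (s.card : ℝ) ^ (p.toReal / q - 1) * ∑ i ∈ s, ‖x i‖ ^ p.toReal := by
        simp only [rpow_div (norm_nonneg _)]
    _ ≤ (s.card : ℝ) ^ (p.toReal / q - 1) * ‖x‖ ^ p.toReal := by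
        gcongr
        exact lp.sum_rpow_le_norm_rpow hp x s
    _ = ((s.card : ℝ) ^ ((p.toReal - q) / p.toReal) * ‖x‖ ^ q) ^ (p.toReal / q) := by
        rw [Real.mul_rpow (by positivity) (Real.rpow_nonneg hx q), rpow_div hx,
          ← Real.rpow_mul (by positivity)]
        congr 2
        field_simp

lemma sum_norm_mul_norm_le_card_rpow_mul {F : ι → Type*} [∀ i, NormedAddCommGroup (F i)]
    (hp : 2 ≤ p.toReal) (x : lp E p) (y : lp F p) (s : Finset ι) :
    ∑ i ∈ s, ‖x i‖ * ‖y i‖ ≤ (s.card : ℝ) ^ ((p.toReal - 2) / p.toReal) * (‖x‖ * ‖y‖) := by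
  have hx := sum_norm_rpow_le_card_rpow_mul_norm_rpow two_pos hp x s
  have hy := sum_norm_rpow_le_card_rpow_mul_norm_rpow two_pos hp y s
  simp only [Real.rpow_two] at hx hy
  have hx₀ : 0 ≤ ‖x‖ := lp.norm_nonneg' x
  have hy₀ : 0 ≤ ‖y‖ := lp.norm_nonneg' y
  refine le_of_pow_le_pow_left₀ two_ne_zero (by positivity) ?_
  calc (∑ i ∈ s, ‖x i‖ * ‖y i‖) ^ 2
      ≤ (∑ i ∈ s, ‖x i‖ ^ 2) * ∑ i ∈ s, ‖y i‖ ^ 2 := Finset.sum_mul_sq_le_sq_mul_sq s _ _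
    _ ≤ ((s.card : ℝ) ^ ((p.toReal - 2) / p.toReal) * ‖x‖ ^ 2) *
          ((s.card : ℝ) ^ ((p.toReal - 2) / p.toReal) * ‖y‖ ^ 2) := by gcongr
    _ = ((s.card : ℝ) ^ ((p.toReal - 2) / p.toReal) * (‖x‖ * ‖y‖)) ^ 2 := by ring

lemma norm_single_add_single_rpow [DecidableEq ι] (hp : 0 < p.toReal) {i j : ι} (hij : i ≠ j)
    (a : E i) (b : E j) :
    ‖lp.single p i a + lp.single p j b‖ ^ p.toReal = ‖a‖ ^ p.toReal + ‖b‖ ^ p.toReal := by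
  have h := lp.norm_sum_single hp (Function.update (Pi.single i a) j b) {i, j}
  simpa only [Finset.sum_pair hij, Function.update_self, Function.update_of_ne hij,
    Pi.single_eq_same] using h

lemma norm_single_add_single_of_norm_eq_one [DecidableEq ι] (hp : 0 < p.toReal) {i j : ι}
    (hij : i ≠ j) {a : E i} {b : E j} (ha : ‖a‖ = 1) (hb : ‖b‖ = 1) :
    ‖lp.single p i a + lp.single p j b‖ = 2 ^ p.toReal⁻¹ := by
  have h := norm_single_add_single_rpow hp hij a b
  rw [ha, hb, Real.one_rpow, one_add_one_eq_two] at h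
  rw [← h, Real.rpow_rpow_inv (lp.norm_nonneg' _) hp.ne']

end LpEstimates

section HyperbolicForm

variable {ι 𝕜 : Type*} {p : ℝ≥0∞} [Fact (1 ≤ p)]

/-- The hyperbolic bilinear form `(x, y) ↦ xᵢ yᵢ - xⱼ yⱼ` on `ℓ_p`, whose bilinear and polynomial
norms are compared here. -/
noncomputable def hyperbolicForm [NormedField 𝕜] (p : ℝ≥0∞) [Fact (1 ≤ p)] (i j : ι) :
    ContinuousMultilinearMap 𝕜 (fun _ : Fin 2 ↦ lp (fun _ : ι ↦ 𝕜) p) 𝕜 :=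
  (ContinuousMultilinearMap.mkPiAlgebra 𝕜 (Fin 2) 𝕜).compContinuousLinearMap
      (fun _ ↦ lp.evalCLM 𝕜 (fun _ : ι ↦ 𝕜) p i) -
    (ContinuousMultilinearMap.mkPiAlgebra 𝕜 (Fin 2) 𝕜).compContinuousLinearMap
      (fun _ ↦ lp.evalCLM 𝕜 (fun _ : ι ↦ 𝕜) p j)

lemma hyperbolicForm_apply [NormedField 𝕜] (i j : ι) (v : Fin 2 → lp (fun _ : ι ↦ 𝕜) p) :
    hyperbolicForm p i j v = v 0 i * v 1 i - v 0 j * v 1 j := by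
  change ∏ k, v k i - ∏ k, v k j = _
  simp only [Fin.prod_univ_two]

lemma hyperbolicForm_comp_perm [NormedField 𝕜] (i j : ι) (σ : Equiv.Perm (Fin 2))
    (v : Fin 2 → lp (fun _ : ι ↦ 𝕜) p) :
    hyperbolicForm p i j (v ∘ σ) = hyperbolicForm p i j v := by
  change ∏ k, v (σ k) i - ∏ k, v (σ k) j = ∏ k, v k i - ∏ k, v k j
  rw [Equiv.prod_comp σ fun k ↦ v k i, Equiv.prod_comp σ fun k ↦ v k j]

lemma isGreatest_norm_hyperbolicForm_diag {i j : ι} (hij : i ≠ j) :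
    IsGreatest ((fun u ↦ ‖hyperbolicForm p i j (fun _ ↦ u)‖) ''
      closedBall (0 : lp (fun _ : ι ↦ ℝ) p) 1) 1 := by
  classical
  have hp : 0 < p := zero_lt_one.trans_le Fact.out
  constructor
  · refine ⟨lp.single p i 1, ?_, ?_⟩
    · rw [mem_closedBall_zero_iff, lp.norm_single hp, norm_one]
    · simp [hyperbolicForm_apply, hij.symm]
  · rintro _ ⟨x, hx, rfl⟩
    have sq_le_one (k : ι) : x k * x k ≤ 1 :=
      abs_le_one_iff_mul_self_le_one.mp <|
        (lp.norm_apply_le_norm hp.ne' x k).trans (mem_closedBall_zero_iff.mp hx)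
    simp only [hyperbolicForm_apply, Real.norm_eq_abs]
    exact abs_sub_le_of_nonneg_of_le (mul_self_nonneg _) (sq_le_one i) (mul_self_nonneg _)
      (sq_le_one j)

variable [RCLike 𝕜] {i j : ι}

lemma norm_hyperbolicForm_le (hp : 2 ≤ p.toReal) (hij : i ≠ j) :
    ‖(hyperbolicForm p i j : ContinuousMultilinearMap 𝕜 _ _)‖ ≤
      2 ^ ((p.toReal - 2) / p.toReal) := by
  classical
  refine ContinuousMultilinearMap.opNorm_le_bound (by positivity) fun v ↦ ?_
  calc ‖hyperbolicForm p i j v‖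
      ≤ ‖v 0 i‖ * ‖v 1 i‖ + ‖v 0 j‖ * ‖v 1 j‖ := by
        simpa only [hyperbolicForm_apply, norm_mul] using
          norm_sub_le (v 0 i * v 1 i) (v 0 j * v 1 j)
    _ ≤ 2 ^ ((p.toReal - 2) / p.toReal) * (‖v 0‖ * ‖v 1‖) := by
        simpa only [Finset.sum_pair hij, Finset.card_pair hij, Nat.cast_ofNat] using
          sum_norm_mul_norm_le_card_rpow_mul hp (v 0) (v 1) {i, j}
    _ = 2 ^ ((p.toReal - 2) / p.toReal) * ∏ k, ‖v k‖ := by rw [Fin.prod_univ_two]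

lemma le_norm_hyperbolicForm (hp : 0 < p.toReal) (hij : i ≠ j) :
    2 ^ ((p.toReal - 2) / p.toReal) ≤
      ‖(hyperbolicForm p i j : ContinuousMultilinearMap 𝕜 _ _)‖ := by
  classical
  set x : lp (fun _ : ι ↦ 𝕜) p := lp.single p i 1 + lp.single p j 1
  set y : lp (fun _ : ι ↦ 𝕜) p := lp.single p i 1 + lp.single p j (-1)
  have norm_x : ‖x‖ = 2 ^ p.toReal⁻¹ :=
    norm_single_add_single_of_norm_eq_one hp hij norm_one norm_one
  have norm_y : ‖y‖ = 2 ^ p.toReal⁻¹ :=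
    norm_single_add_single_of_norm_eq_one hp hij norm_one (by rw [norm_neg, norm_one])
  have apply_xy : hyperbolicForm p i j ![x, y] = (2 : 𝕜) := by
    simp [hyperbolicForm_apply, x, y, hij, hij.symm, one_add_one_eq_two]
  have key := (hyperbolicForm p i j).le_opNorm ![x, y]
  rw [apply_xy, RCLike.norm_two, Fin.prod_univ_two] at key
  simp only [Matrix.cons_val_zero, Matrix.cons_val_one, norm_x, norm_y] at key
  refine le_of_mul_le_mul_right ?_ (show (0 : ℝ) < 2 ^ p.toReal⁻¹ * 2 ^ p.toReal⁻¹ by positivity)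
  calc (2 : ℝ) ^ ((p.toReal - 2) / p.toReal) * (2 ^ p.toReal⁻¹ * 2 ^ p.toReal⁻¹)
      = 2 ^ ((p.toReal - 2) / p.toReal + (p.toReal⁻¹ + p.toReal⁻¹)) := by
        simp only [Real.rpow_add two_pos]
    _ = 2 := by
        rw [show (p.toReal - 2) / p.toReal + (p.toReal⁻¹ + p.toReal⁻¹) = 1 by field_simp; ring,
          Real.rpow_one]
    _ ≤ _ := key

lemma norm_hyperbolicForm (hp : 2 ≤ p.toReal) (hij : i ≠ j) :
    ‖(hyperbolicForm p i j : ContinuousMultilinearMap 𝕜 _ _)‖ =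
      2 ^ ((p.toReal - 2) / p.toReal) :=
  (norm_hyperbolicForm_le hp hij).antisymm (le_norm_hyperbolicForm (two_pos.trans_le hp) hij)

end HyperbolicForm

theorem polarization_lower_bound_real_lp_general
    {ι : Type*} {i j : ι} (hij : i ≠ j) (p : ℝ≥0∞) (hp2 : 2 ≤ p.toReal) [Fact (1 ≤ p)] :
    (∃ L : ContinuousMultilinearMap ℝ
        (fun _ : Fin 2 ↦ lp (fun _ : ι ↦ ℝ) p) ℝ,
      (∀ (σ : Equiv.Perm (Fin 2)) (v : Fin 2 → lp (fun _ : ι ↦ ℝ) p),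
        L (v ∘ σ) = L v) ∧
      (∀ v, L v = v 0 i * v 1 i - v 0 j * v 1 j) ∧
      sSup ((fun u ↦ ‖L (fun _ ↦ u)‖) ''
          closedBall (0 : lp (fun _ : ι ↦ ℝ) p) 1) = 1 ∧
      ‖L‖ = (2 : ℝ) ^ ((p.toReal - 2) / p.toReal) ∧
      ‖L‖ = (2 : ℝ) ^ ((p.toReal - 2) / p.toReal)
        * sSup ((fun u ↦ ‖L (fun _ ↦ u)‖) ''
            closedBall (0 : lp (fun _ : ι ↦ ℝ) p) 1)) ∧
    ∀ M : ℝ,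
      (∀ B : ContinuousMultilinearMap ℝ
          (fun _ : Fin 2 ↦ lp (fun _ : ι ↦ ℝ) p) ℝ,
        (∀ (σ : Equiv.Perm (Fin 2)) (v : Fin 2 → lp (fun _ : ι ↦ ℝ) p),
          B (v ∘ σ) = B v) →
        ‖B‖ ≤ M * sSup ((fun u ↦ ‖B (fun _ ↦ u)‖) ''
            closedBall (0 : lp (fun _ : ι ↦ ℝ) p) 1)) →
      (2 : ℝ) ^ ((p.toReal - 2) / p.toReal) ≤ M := by
  have poly_norm := (isGreatest_norm_hyperbolicForm_diag (p := p) hij).csSup_eq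
  have form_norm := norm_hyperbolicForm (𝕜 := ℝ) hp2 hij
  refine ⟨⟨hyperbolicForm p i j, hyperbolicForm_comp_perm i j, hyperbolicForm_apply i j,
    poly_norm, form_norm, by rw [poly_norm, form_norm, mul_one]⟩, fun M hM ↦ ?_⟩
  simpa only [form_norm, poly_norm, mul_one] using
    hM (hyperbolicForm p i j) (hyperbolicForm_comp_perm i j)

/-- On the real space `ℓ_p`, `2 ≤ p < ∞`, the symmetric bilinear form
`L(x,y) = x₁y₁ - x₂y₂`, with `L̂(x) = x₁² - x₂²`, satisfies `‖L̂‖ = 1` and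
`‖L‖ = 2^{(p-2)/p} = 2^{(p-2)/p} ‖L̂‖`; consequently the second polarization constant
of real `ℓ_p` is at least `2^{(p-2)/p}`. -/
theorem polarization_lower_bound_real_lp
    (p : ℝ) (hp2 : 2 ≤ p) [Fact (1 ≤ ENNReal.ofReal p)] :
    (∃ L : ContinuousMultilinearMap ℝ
        (fun _ : Fin 2 => lp (fun _ : ℕ => ℝ) (ENNReal.ofReal p)) ℝ,
      (∀ (σ : Equiv.Perm (Fin 2)) (v : Fin 2 → lp (fun _ : ℕ => ℝ) (ENNReal.ofReal p)),
        L (v ∘ σ) = L v) ∧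
      (∀ v, L v = v 0 0 * v 1 0 - v 0 1 * v 1 1) ∧
      sSup ((fun u => ‖L (fun _ => u)‖) ''
          closedBall (0 : lp (fun _ : ℕ => ℝ) (ENNReal.ofReal p)) 1) = 1 ∧
      ‖L‖ = (2 : ℝ) ^ ((p - 2) / p) ∧
      ‖L‖ = (2 : ℝ) ^ ((p - 2) / p)
        * sSup ((fun u => ‖L (fun _ => u)‖) ''
            closedBall (0 : lp (fun _ : ℕ => ℝ) (ENNReal.ofReal p)) 1)) ∧
    ∀ M : ℝ,
      (∀ B : ContinuousMultilinearMap ℝ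
          (fun _ : Fin 2 => lp (fun _ : ℕ => ℝ) (ENNReal.ofReal p)) ℝ,
        (∀ (σ : Equiv.Perm (Fin 2)) (v : Fin 2 → lp (fun _ : ℕ => ℝ) (ENNReal.ofReal p)),
          B (v ∘ σ) = B v) →
        ‖B‖ ≤ M * sSup ((fun u => ‖B (fun _ => u)‖) ''
            closedBall (0 : lp (fun _ : ℕ => ℝ) (ENNReal.ofReal p)) 1)) →
      (2 : ℝ) ^ ((p - 2) / p) ≤ M := by
  have toReal_p : (ENNReal.ofReal p).toReal = p := ENNReal.toReal_ofReal (zero_le_two.trans hp2)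
  simpa only [toReal_p] using polarization_lower_bound_real_lp_general (zero_ne_one (α := ℕ))
    (ENNReal.ofReal p) (toReal_p.symm ▸ hp2)
end
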